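/- arXiv:1511.07670 — 11 statements merged into one kernel-verified Lean document; each statement's English description precedes it below -/
import Mathlib

section
/- For every κ > 0, r > 0 and every complex number z with Re z < 0, one has ∫₀^∞ e^{z t} · (κ r / ((4π t)^{3/2} sinh(κ r))) · exp(−κ² t − r²/(4t)) dt = κ e^{−r √(κ² − z)} / (4π sinh(κ r)), where √(κ² − z) denotes the principal branch of the square root (well defined since Re(κ² − z) > 0). In other words, the off-diagonal entry of the principal matrix on hyperbolic 3-space equals the stated closed-form expression. -/
open Real MeasureTheory Set

/-!
The substitution `t = x⁻²` turns `∫₀^∞ e^{-wt} e^{-a/t} t^{-3/2} dt` into twice the integral of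
`e^{-a x² - w / x²}` over `(0, ∞)`. For `w = b > 0`, completing the square with `s = √(b / a)` gives
`a x² + b / x² = a (x - s / x)² + 2 √(a b)`, and since `x ↦ x - s / x` preserves Lebesgue
measure on `ℝ` (Boole), what remains is a Gaussian integral. Both sides are holomorphic for
`0 < Re w` and continuous up to the imaginary axis, so the identity extends to `0 ≤ Re w`; the
theorem is the case `w = κ² - z`, `a = r² / 4`.
-/

open Filter Topology

section Boole

variable {E : Type*} [NormedAddCommGroup E] {f : ℝ → E} {s : ℝ}

theorem hasDerivAt_neg_div (s : ℝ) {x : ℝ} (hx : x ≠ 0) :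
    HasDerivAt (fun x ↦ -(s / x)) (s / x ^ 2) x := by
  refine ((hasDerivAt_inv hx).const_mul (-s)).congr_deriv ?_ |>.congr_of_eventuallyEq ?_
  · field_simp
  · exact .of_forall fun y ↦ by simp [div_eq_mul_inv]

theorem hasDerivAt_sub_div (s : ℝ) {x : ℝ} (hx : x ≠ 0) :
    HasDerivAt (fun x ↦ x - s / x) (1 + s / x ^ 2) x := by
  simpa only [sub_eq_add_neg] using! (hasDerivAt_id' x).add (hasDerivAt_neg_div s hx)

theorem monotoneOn_neg_div (hs : 0 ≤ s) : MonotoneOn (fun x ↦ -(s / x)) (Ioi 0) :=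
  fun _ hx _ _ hxy ↦ neg_le_neg (div_le_div_of_nonneg_left hs hx hxy)

theorem monotoneOn_sub_div (hs : 0 ≤ s) : MonotoneOn (fun x ↦ x - s / x) (Ioi 0) := by
  simpa only [sub_eq_add_neg] using! monotoneOn_id.add (monotoneOn_neg_div hs)

theorem image_neg_div_Ioi (hs : 0 < s) : (fun x ↦ -(s / x)) '' Ioi 0 = Iio 0 := by
  ext y
  constructor
  · rintro ⟨x, hx, rfl⟩
    exact neg_neg_of_pos (div_pos hs hx)
  · intro hy
    have hy₀ : y ≠ 0 := ne_of_lt hy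
    exact ⟨-(s / y), neg_pos.2 (div_neg_of_pos_of_neg hs hy), by field_simp⟩

theorem image_sub_div_Ioi (hs : 0 < s) : (fun x ↦ x - s / x) '' Ioi 0 = univ := by
  refine eq_univ_of_forall fun y ↦ ?_
  -- the positive root of `x² - y x - s = 0`
  have habs : |y| < √(y ^ 2 + 4 * s) := lt_sqrt_of_sq_lt (by rw [sq_abs]; linarith)
  have hpos : 0 < (y + √(y ^ 2 + 4 * s)) / 2 := by linarith [neg_abs_le y]
  refine ⟨_, hpos, ?_⟩
  have hsq : √(y ^ 2 + 4 * s) ^ 2 = y ^ 2 + 4 * s := sq_sqrt (by positivity)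
  have hne : y + √(y ^ 2 + 4 * s) ≠ 0 := by linarith
  field_simp
  linear_combination hsq

variable [NormedSpace ℝ E]

theorem integrableOn_deriv_smul_comp_sub_div (hs : 0 < s) (hf : Integrable f) :
    IntegrableOn (fun x ↦ (1 + s / x ^ 2) • f (x - s / x)) (Ioi 0) := by
  rw [← integrableOn_image_iff_integrableOn_deriv_smul_of_monotoneOn measurableSet_Ioi
    (fun x hx ↦ (hasDerivAt_sub_div s (ne_of_gt hx)).hasDerivWithinAt)
    (monotoneOn_sub_div hs.le), image_sub_div_Ioi hs]
  exact hf.integrableOn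

theorem integrableOn_comp_sub_div_Ioi (hs : 0 < s) (hf : Integrable f) :
    IntegrableOn (fun x ↦ f (x - s / x)) (Ioi 0) := by
  have hbound (x : ℝ) : ‖(1 + s / x ^ 2)⁻¹‖ ≤ 1 := by
    rw [norm_of_nonneg (by positivity)]
    exact inv_le_one_of_one_le₀ (le_add_of_nonneg_right (by positivity))
  have hmeas : Measurable fun x : ℝ ↦ (1 + s / x ^ 2)⁻¹ := by fun_prop
  refine ((integrableOn_deriv_smul_comp_sub_div hs hf).bdd_smul 1 hmeas.aestronglyMeasurable
    (.of_forall hbound)).congr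
    (.of_forall fun x ↦ inv_smul_smul₀ (by positivity) _)

theorem integrableOn_div_sq_smul_comp_sub_div (hs : 0 < s) (hf : Integrable f) :
    IntegrableOn (fun x ↦ (s / x ^ 2) • f (x - s / x)) (Ioi 0) := by
  refine ((integrableOn_deriv_smul_comp_sub_div hs hf).sub
    (integrableOn_comp_sub_div_Ioi hs hf)).congr (.of_forall fun x ↦ ?_)
  simp only [Pi.sub_apply, add_smul, one_smul, add_sub_cancel_left]

theorem neg_div_sub_div_neg_div {x : ℝ} (hs : s ≠ 0) : -(s / x) - s / -(s / x) = x - s / x := by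
  rw [div_neg, div_div_cancel₀ hs]
  ring

theorem integrableOn_comp_sub_div_Iio (hs : 0 < s) (hf : Integrable f) :
    IntegrableOn (fun x ↦ f (x - s / x)) (Iio 0) := by
  rw [← image_neg_div_Ioi hs, integrableOn_image_iff_integrableOn_deriv_smul_of_monotoneOn
    measurableSet_Ioi (fun x hx ↦ (hasDerivAt_neg_div s (ne_of_gt hx)).hasDerivWithinAt)
    (monotoneOn_neg_div hs.le)]
  simpa only [neg_div_sub_div_neg_div hs.ne'] using integrableOn_div_sq_smul_comp_sub_div hs hf

theorem integral_comp_sub_div_Iio (hs : 0 < s) :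
    ∫ x in Iio 0, f (x - s / x) = ∫ x in Ioi 0, (s / x ^ 2) • f (x - s / x) := by
  rw [← image_neg_div_Ioi hs, integral_image_eq_integral_deriv_smul_of_monotoneOn
    measurableSet_Ioi (fun x hx ↦ (hasDerivAt_neg_div s (ne_of_gt hx)).hasDerivWithinAt)
    (monotoneOn_neg_div hs.le)]
  simp only [neg_div_sub_div_neg_div hs.ne']

theorem integral_deriv_smul_comp_sub_div (hs : 0 < s) :
    ∫ x in Ioi 0, (1 + s / x ^ 2) • f (x - s / x) = ∫ x, f x := by
  rw [← integral_image_eq_integral_deriv_smul_of_monotoneOn measurableSet_Ioi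
    (fun x hx ↦ (hasDerivAt_sub_div s (ne_of_gt hx)).hasDerivWithinAt)
    (monotoneOn_sub_div hs.le), image_sub_div_Ioi hs, setIntegral_univ]

-- The map `x ↦ -(s / x)` exchanges the two half-lines and leaves `x - s / x` unchanged, so the
-- negative half-line contributes the weight `s / x ^ 2` that completes `1` to the derivative.
theorem integral_comp_sub_div (hs : 0 < s) (hf : Integrable f) :
    ∫ x, f (x - s / x) = ∫ x, f x := by
  have hIoi := integrableOn_comp_sub_div_Ioi hs hf
  calc ∫ x, f (x - s / x)
      = (∫ x in Iio 0, f (x - s / x)) + ∫ x in Ioi 0, f (x - s / x) := by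
        rw [← integral_Ici_eq_integral_Ioi, ← setIntegral_union (Iio_disjoint_Ici le_rfl)
          measurableSet_Ici (integrableOn_comp_sub_div_Iio hs hf)
          ((integrableOn_Ici_iff_integrableOn_Ioi (by finiteness)).2 hIoi),
          Iio_union_Ici, setIntegral_univ]
    _ = ∫ x in Ioi 0, (1 + s / x ^ 2) • f (x - s / x) := by
        rw [integral_comp_sub_div_Iio hs, add_comm,
          ← integral_add hIoi (integrableOn_div_sq_smul_comp_sub_div hs hf)]
        simp only [add_smul, one_smul]
    _ = ∫ x, f x := integral_deriv_smul_comp_sub_div hs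

end Boole

theorem integral_exp_neg_mul_sub_div_sq_Ioi {a s : ℝ} (ha : 0 < a) (hs : 0 < s) :
    ∫ x in Ioi 0, rexp (-a * (x - s / x) ^ 2) = √(π / a) / 2 := by
  have hline : ∫ x, rexp (-a * (x - s / x) ^ 2) = √(π / a) := by
    rw [integral_comp_sub_div (f := fun y ↦ rexp (-a * y ^ 2)) hs (integrable_exp_neg_mul_sq ha),
      integral_gaussian]
  have heven (x : ℝ) : rexp (-a * (|x| - s / |x|) ^ 2) = rexp (-a * (x - s / x) ^ 2) := by
    rcases abs_choice x with h | h <;> rw [h]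
    ring_nf
  have hhalf := integral_comp_abs (f := fun x ↦ rexp (-a * (x - s / x) ^ 2))
  simp only [heven, hline] at hhalf
  linarith

theorem integral_exp_neg_mul_sq_add_div_sq_Ioi {a b : ℝ} (ha : 0 < a) (hb : 0 < b) :
    ∫ x in Ioi 0, rexp (-(a * x ^ 2 + b / x ^ 2)) = √(π / a) / 2 * rexp (-(2 * √(a * b))) := by
  have hsqrt : √(a * b) = a * √(b / a) := by
    rw [show a * b = a ^ 2 * (b / a) by field_simp, sqrt_mul (sq_nonneg a), sqrt_sq ha.le]
  have hb_eq : b = a * √(b / a) ^ 2 := by rw [sq_sqrt (by positivity)]; field_simp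
  have hs : 0 < √(b / a) := by positivity
  rw [hsqrt]
  generalize √(b / a) = s at hb_eq hs
  subst hb_eq
  rw [← integral_exp_neg_mul_sub_div_sq_Ioi ha hs, ← integral_mul_const]
  refine setIntegral_congr_fun measurableSet_Ioi fun x hx ↦ ?_
  have hx₀ : x ≠ 0 := ne_of_gt hx
  simp only [← Real.exp_add]
  congr 1
  field_simp
  ring

section LaplaceTransform

variable {α E : Type*} [MeasurableSpace α] {μ : Measure α} [NormedAddCommGroup E]
  [NormedSpace ℂ E] {X : α → ℝ} {g : α → E}

theorem norm_cexp_neg_mul_ofReal (w : ℂ) (x : ℝ) :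
    ‖Complex.exp (-(w * x))‖ = rexp (-(w.re * x)) := by
  simp [Complex.norm_exp]

theorem norm_cexp_neg_mul_ofReal_le_one {w : ℂ} {x : ℝ} (hw : 0 ≤ w.re) (hx : 0 ≤ x) :
    ‖Complex.exp (-(w * x))‖ ≤ 1 := by
  rw [norm_cexp_neg_mul_ofReal, exp_le_one_iff]
  exact neg_nonpos.2 (mul_nonneg hw hx)

theorem norm_mul_cexp_neg_mul_ofReal_le {w : ℂ} {x c : ℝ} (hc : 0 < c) (hw : c ≤ w.re)
    (hx : 0 ≤ x) : ‖x * Complex.exp (-(w * x))‖ ≤ c⁻¹ := by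
  have hexp : c * x * rexp (-(c * x)) ≤ 1 :=
    (mul_exp_neg_le_exp_neg_one _).trans (exp_le_one_iff.2 (by norm_num))
  rw [norm_mul, norm_cexp_neg_mul_ofReal, Complex.norm_of_nonneg hx]
  calc x * rexp (-(w.re * x)) ≤ x * rexp (-(c * x)) := by gcongr
    _ ≤ c⁻¹ := by rwa [← mul_le_mul_iff_right₀ hc, mul_inv_cancel₀ hc.ne', ← mul_assoc]

theorem continuousOn_integral_cexp_neg_mul (hX : AEMeasurable X μ) (hX₀ : 0 ≤ᵐ[μ] X)
    (hg : Integrable g μ) :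
    ContinuousOn (fun w : ℂ ↦ ∫ x, Complex.exp (-(w * X x)) • g x ∂μ) {w | 0 ≤ w.re} := by
  refine continuousOn_of_dominated (bound := fun x ↦ ‖g x‖)
    (fun w _ ↦ AEStronglyMeasurable.smul (by fun_prop) hg.aestronglyMeasurable) (fun w hw ↦ ?_)
    hg.norm (.of_forall fun x ↦ by fun_prop)
  filter_upwards [hX₀] with x hx
  rw [norm_smul]
  exact mul_le_of_le_one_left (norm_nonneg _) (norm_cexp_neg_mul_ofReal_le_one hw hx)

theorem differentiableOn_integral_cexp_neg_mul (hX : AEMeasurable X μ) (hX₀ : 0 ≤ᵐ[μ] X)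
    (hg : Integrable g μ) :
    DifferentiableOn ℂ (fun w : ℂ ↦ ∫ x, Complex.exp (-(w * X x)) • g x ∂μ) {w | 0 < w.re} := by
  intro w₀ hw₀
  obtain ⟨c, hc, hcw₀⟩ := exists_between (show 0 < w₀.re from hw₀)
  have hnhds : {w : ℂ | c < w.re} ∈ 𝓝 w₀ :=
    (isOpen_lt continuous_const Complex.continuous_re).mem_nhds hcw₀
  have hmeas (w : ℂ) : AEStronglyMeasurable (fun x ↦ Complex.exp (-(w * X x)) • g x) μ :=
    AEStronglyMeasurable.smul (by fun_prop) hg.aestronglyMeasurable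
  refine (hasDerivAt_integral_of_dominated_loc_of_deriv_le hnhds (.of_forall hmeas)
    (F' := fun w x ↦ (-(X x * Complex.exp (-(w * X x)))) • g x)
    (bound := fun x ↦ c⁻¹ * ‖g x‖) (hg.norm.mono' (hmeas w₀) ?_)
    (AEStronglyMeasurable.smul (by fun_prop) hg.aestronglyMeasurable) ?_
    (hg.norm.const_mul _) ?_).2.differentiableAt.differentiableWithinAt
  · filter_upwards [hX₀] with x hx
    rw [norm_smul]
    exact mul_le_of_le_one_left (norm_nonneg _) (norm_cexp_neg_mul_ofReal_le_one hw₀.le hx)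
  · filter_upwards [hX₀] with x hx w hw
    rw [norm_smul, norm_neg]
    gcongr
    exact norm_mul_cexp_neg_mul_ofReal_le hc (le_of_lt hw) hx
  · refine .of_forall fun x w _ ↦ HasDerivAt.smul_const ?_ (g x)
    exact ((hasDerivAt_mul_const (X x : ℂ)).fun_neg.cexp).congr_deriv (by ring)

theorem diffContOnCl_integral_cexp_neg_mul (hX : AEMeasurable X μ) (hX₀ : 0 ≤ᵐ[μ] X)
    (hg : Integrable g μ) :
    DiffContOnCl ℂ (fun w : ℂ ↦ ∫ x, Complex.exp (-(w * X x)) • g x ∂μ) {w | 0 < w.re} :=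
  ⟨differentiableOn_integral_cexp_neg_mul hX hX₀ hg, by
    rw [Complex.closure_setOfPred_lt_re]
    exact continuousOn_integral_cexp_neg_mul hX hX₀ hg⟩

end LaplaceTransform

section AnalyticContinuation

variable {E : Type*} [NormedAddCommGroup E] [NormedSpace ℂ E] [CompleteSpace E] {F G : ℂ → E}

theorem eqOn_re_pos_of_eq_ofReal (hF : DifferentiableOn ℂ F {w | 0 < w.re})
    (hG : DifferentiableOn ℂ G {w | 0 < w.re}) (h : ∀ b : ℝ, 0 < b → F b = G b) :
    EqOn F G {w | 0 < w.re} := by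
  have hopen : IsOpen {w : ℂ | 0 < w.re} := isOpen_lt continuous_const Complex.continuous_re
  have hofReal : Tendsto (fun b : ℝ ↦ (b : ℂ)) (𝓝[≠] 1) (𝓝[≠] 1) :=
    Complex.continuous_ofReal.continuousAt.continuousWithinAt.tendsto_nhdsWithin
      fun b hb ↦ Complex.ofReal_ne_one.2 hb
  have hfreq : ∃ᶠ w in 𝓝[≠] (1 : ℂ), F w = G w := by
    refine hofReal.frequently (Eventually.frequently ?_)
    filter_upwards [nhdsWithin_le_nhds (Ioi_mem_nhds one_pos)] with b hb using h b hb
  exact (hF.analyticOnNhd hopen).eqOn_of_preconnected_of_frequently_eq (hG.analyticOnNhd hopen)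
    (convex_halfSpace_re_gt 0).isPreconnected (by simp) hfreq

theorem eqOn_re_nonneg_of_eq_ofReal (hF : DiffContOnCl ℂ F {w | 0 < w.re})
    (hG : DiffContOnCl ℂ G {w | 0 < w.re}) (h : ∀ b : ℝ, 0 < b → F b = G b) :
    EqOn F G {w | 0 ≤ w.re} := by
  rw [← Complex.closure_setOfPred_lt_re]
  exact (eqOn_re_pos_of_eq_ofReal hF.1 hG.1 h).of_subset_closure hF.2 hG.2 subset_closure le_rfl

end AnalyticContinuation

theorem diffContOnCl_cexp_neg_mul_sqrt (c : ℂ) :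
    DiffContOnCl ℂ (fun w ↦ Complex.exp (-(c * Complex.sqrt w))) {w | 0 < w.re} := by
  have hsqrt : DiffContOnCl ℂ Complex.sqrt {w | 0 < w.re} := by
    refine ⟨Complex.differentiableOn_sqrt.mono fun w hw ↦ Or.inl hw, fun w hw ↦ ?_⟩
    rw [Complex.closure_setOfPred_lt_re] at hw
    exact (Complex.continuousAt_sqrt (Or.inl hw)).continuousWithinAt
  exact Complex.differentiable_exp.comp_diffContOnCl (hsqrt.const_smul c).neg

theorem integral_cexp_neg_mul_inv_sq_mul_exp_Ioi {a : ℝ} (ha : 0 < a) {w : ℂ} (hw : 0 ≤ w.re) :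
    ∫ x in Ioi (0 : ℝ), Complex.exp (-(w * ((x ^ 2)⁻¹ : ℝ))) * (rexp (-a * x ^ 2) : ℂ) =
      (√(π / a) / 2 : ℝ) * Complex.exp (-(2 * √a * Complex.sqrt w)) := by
  have hgauss : Integrable (fun x ↦ (rexp (-a * x ^ 2) : ℂ)) (volume.restrict (Ioi 0)) :=
    (integrable_exp_neg_mul_sq ha).restrict.ofReal
  have hholo := diffContOnCl_integral_cexp_neg_mul (X := fun x ↦ (x ^ 2)⁻¹) (by fun_prop)
    (.of_forall fun x ↦ by positivity) hgauss
  have hreal (b : ℝ) (hb : 0 < b) :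
      ∫ x in Ioi (0 : ℝ), Complex.exp (-(b * ((x ^ 2)⁻¹ : ℝ))) * (rexp (-a * x ^ 2) : ℂ) =
        (√(π / a) / 2 : ℝ) * Complex.exp (-(2 * √a * Complex.sqrt b)) := by
    rw [Complex.sqrt_of_nonneg (Complex.zero_le_real.2 hb.le), Complex.ofReal_re]
    calc _ = ((∫ x in Ioi 0, rexp (-(a * x ^ 2 + b / x ^ 2)) : ℝ) : ℂ) := by
          rw [← integral_complex_ofReal]
          congr with x
          push_cast [← Complex.exp_add]
          ring_nf
      _ = _ := by
          rw [integral_exp_neg_mul_sq_add_div_sq_Ioi ha hb]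
          push_cast [sqrt_mul ha.le]
          ring_nf
  exact eqOn_re_nonneg_of_eq_ofReal hholo
    ((diffContOnCl_cexp_neg_mul_sqrt _).const_smul ((√(π / a) / 2 : ℝ) : ℂ)) hreal hw

theorem integral_cexp_neg_mul_mul_exp_neg_div_Ioi {a : ℝ} (ha : 0 < a) {w : ℂ} (hw : 0 ≤ w.re) :
    ∫ t in Ioi (0 : ℝ), Complex.exp (-(w * t)) * (rexp (-(a / t)) / t ^ (3 / 2 : ℝ) : ℝ) =
      √(π / a) * Complex.exp (-(2 * √a * Complex.sqrt w)) := by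
  rw [← integral_comp_rpow_Ioi _ (p := -2) (by norm_num)]
  have hsubst : ∀ x ∈ Ioi (0 : ℝ), (|(-2 : ℝ)| * x ^ ((-2 : ℝ) - 1)) •
      (Complex.exp (-(w * (x ^ (-2 : ℝ) : ℝ))) *
        (rexp (-(a / x ^ (-2 : ℝ))) / (x ^ (-2 : ℝ)) ^ (3 / 2 : ℝ) : ℝ)) =
      2 * (Complex.exp (-(w * ((x ^ 2)⁻¹ : ℝ))) * (rexp (-a * x ^ 2) : ℂ)) := by
    intro x hx
    have hx₀ : 0 < x := hx
    have hsq : x ^ (-2 : ℝ) = (x ^ 2)⁻¹ := by rw [rpow_neg hx₀.le, rpow_two]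
    have hcube : (x ^ (-2 : ℝ)) ^ (3 / 2 : ℝ) = x ^ ((-2 : ℝ) - 1) := by
      rw [← rpow_mul hx₀.le]
      norm_num
    have hne : ((x ^ ((-2 : ℝ) - 1) : ℝ) : ℂ) ≠ 0 :=
      Complex.ofReal_ne_zero.2 (rpow_pos_of_pos hx₀ _).ne'
    rw [hcube, hsq, div_inv_eq_mul, Complex.real_smul, abs_neg, abs_two]
    push_cast
    field_simp
  rw [setIntegral_congr_fun measurableSet_Ioi hsubst, integral_const_mul,
    integral_cexp_neg_mul_inv_sq_mul_exp_Ioi ha hw]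
  push_cast
  ring

/-- The heat kernel `K_t(r)` of the hyperbolic 3-space of constant curvature `-κ²`, at time `t > 0`
and geodesic distance `r > 0`; on the diagonal `r = 0` the formula only gives the junk value `0`. -/
noncomputable def heatKernelH3 (κ t r : ℝ) : ℝ :=
  κ * r / ((4 * π * t) ^ ((3 : ℝ) / 2) * Real.sinh (κ * r)) *
    Real.exp (-κ ^ 2 * t - r ^ 2 / (4 * t))

theorem four_mul_pi_rpow_three_halves : (4 * π) ^ (3 / 2 : ℝ) = 8 * π * √π := by
  have hsqrt : √4 = 2 := by rw [show (4 : ℝ) = 2 ^ 2 by norm_num, sqrt_sq zero_le_two]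
  rw [rpow_div_two_eq_sqrt _ (by positivity), rpow_ofNat, sqrt_mul zero_le_four, hsqrt]
  linear_combination 8 * √π * sq_sqrt pi_nonneg

theorem cexp_mul_heatKernelH3 (κ r : ℝ) (z : ℂ) {t : ℝ} (ht : 0 < t) :
    Complex.exp (z * t) * heatKernelH3 κ t r =
      (κ * r / (8 * π * √π * Real.sinh (κ * r)) : ℝ) *
        (Complex.exp (-((κ ^ 2 - z) * t)) *
          (rexp (-(r ^ 2 / 4 / t)) / t ^ (3 / 2 : ℝ) : ℝ)) := by
  have hexp : rexp (-κ ^ 2 * t - r ^ 2 / (4 * t)) =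
      rexp (-κ ^ 2 * t) * rexp (-(r ^ 2 / 4 / t)) := by
    rw [← Real.exp_add, div_div, sub_eq_add_neg]
  have hcexp : Complex.exp (-((κ ^ 2 - z) * t)) =
      Complex.exp (z * t) * Complex.exp (-κ ^ 2 * t) := by
    rw [← Complex.exp_add]
    ring_nf
  rw [heatKernelH3, mul_rpow (by positivity) ht.le, four_mul_pi_rpow_three_halves, hexp, hcexp]
  push_cast
  ring

theorem offdiag_principal_matrix_H3_general {κ r : ℝ} (hκ : κ ≠ 0) (hr : 0 < r)
    {z : ℂ} (hz : z.re ≤ κ ^ 2) :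
    ∫ t in Ioi (0 : ℝ), Complex.exp (z * t) * heatKernelH3 κ t r =
      κ * Complex.exp (-r * ((κ : ℂ) ^ 2 - z) ^ ((1 : ℂ) / 2)) /
        (4 * π * Real.sinh (κ * r)) := by
  have hw : 0 ≤ ((κ : ℂ) ^ 2 - z).re := by
    rw [Complex.sub_re, ← Complex.ofReal_pow, Complex.ofReal_re]
    exact sub_nonneg.2 hz
  have hsinh : Real.sinh (κ * r) ≠ 0 := sinh_ne_zero.2 (mul_ne_zero hκ hr.ne')
  have hsqrt : √(r ^ 2 / 4) = r / 2 := by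
    rw [show r ^ 2 / 4 = (r / 2) ^ 2 by ring, sqrt_sq (by positivity)]
  have hcoeff : κ * r / (8 * π * √π * Real.sinh (κ * r)) * √(π / (r ^ 2 / 4)) =
      κ / (4 * π * Real.sinh (κ * r)) := by
    rw [sqrt_div pi_nonneg, hsqrt]
    field_simp
    norm_num
  rw [setIntegral_congr_fun measurableSet_Ioi fun t ht ↦ cexp_mul_heatKernelH3 κ r z ht,
    integral_const_mul, integral_cexp_neg_mul_mul_exp_neg_div_Ioi (by positivity) hw, ← mul_assoc,
    ← Complex.ofReal_mul, hcoeff, hsqrt, Complex.sqrt]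
  push_cast
  ring_nf

/-- The off-diagonal entry of the principal matrix on hyperbolic 3-space:
for `κ > 0`, `r > 0` and `z : ℂ` with `Re z < 0`,
`∫₀^∞ e^{z t} K_t(r) dt = κ e^{-r √(κ² - z)} / (4π sinh (κ r))`,
where `K_t(r) = (κ r / ((4π t)^{3/2} sinh (κ r))) exp(-κ² t - r²/(4t))` is the heat
kernel of `ℍ³_κ` and the square root is the principal branch (complex `cpow`). -/
theorem offdiag_principal_matrix_H3 (κ r : ℝ) (hκ : 0 < κ) (hr : 0 < r)
    (z : ℂ) (hz : z.re < 0) :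
    ∫ t in Ioi (0 : ℝ),
        Complex.exp (z * (t : ℂ)) *
          ((κ * r / ((4 * π * t) ^ ((3 : ℝ) / 2) * Real.sinh (κ * r)) *
             Real.exp (-κ ^ 2 * t - r ^ 2 / (4 * t)) : ℝ) : ℂ)
      = (κ : ℂ) * Complex.exp (-(r : ℂ) * ((κ : ℂ) ^ 2 - z) ^ ((1 : ℂ) / 2)) /
          (4 * (π : ℂ) * (Real.sinh (κ * r) : ℂ)) := by
  exact offdiag_principal_matrix_H3_general hκ.ne' hr (hz.le.trans (sq_nonneg κ))
end

section
/- For every κ > 0, r > 0 and a > 0, one has ∫₀^∞ e^{−a t} K_t(r) dt = (1/(2π)) ∫_{κ r}^{∞} e^{−u √(1/4 + a/κ²)} / √(2 cosh u − 2 cosh(κ r)) du, where K_t(r) is the heat kernel of the hyperbolic plane ℍ²_κ. That is, the off-diagonal entry of the principal matrix on the hyperbolic plane at energy z = −a equals (1/(2π)) times the Legendre function of the second kind Q_λ(cosh(κ r)) expressed by its integral representation. -/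
open Real MeasureTheory Set
open Filter Topology

/-! As a function of `t`, the factor `s e^{-s²/(4κ²t)} t^{-3/2}` in `K_t(r)` is, up to a constant,
the density of the first hitting time of the level `s/κ` by the Brownian motion generated by
`d²/dx²`. The Laplace transform of this density at `b²` is `e^{-bs/κ}`. Taking `b² = κ²/4 + a`,
where `κ²/4` comes from the factor `e^{-κ²t/4}`, and exchanging the integrals over `s` and `t`
gives the integral for `Q`. -/

section ErrorFunction

/-- The error function `erf x = (2/√π) ∫₀ˣ e^{-y²} dy`, normalized to have limits `±1` at `±∞`. -/
noncomputable def erf (x : ℝ) : ℝ := 2 / √π * ∫ y in (0 : ℝ)..x, rexp (-1 * y ^ 2)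

lemma hasDerivAt_erf (x : ℝ) : HasDerivAt erf (2 / √π * rexp (-x ^ 2)) x := by
  have hcont : Continuous fun y : ℝ => rexp (-1 * y ^ 2) := by fun_prop
  rw [← neg_one_mul]
  exact (hcont.integral_hasStrictDerivAt 0 x).hasDerivAt.const_mul (2 / √π)

lemma continuous_erf : Continuous erf :=
  continuous_iff_continuousAt.2 fun x => (hasDerivAt_erf x).continuousAt

lemma erf_zero : erf 0 = 0 := by rw [erf, intervalIntegral.integral_same, mul_zero]

lemma erf_neg (x : ℝ) : erf (-x) = -erf x := by
  have h := intervalIntegral.integral_comp_neg (a := 0) (b := x) fun y => rexp (-1 * y ^ 2)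
  simp only [neg_sq, neg_zero] at h
  rw [erf, erf, h, intervalIntegral.integral_symm, mul_neg]

lemma tendsto_erf_atTop : Tendsto erf atTop (𝓝 1) := by
  have h := (intervalIntegral_tendsto_integral_Ioi (0 : ℝ)
    (integrable_exp_neg_mul_sq one_pos).integrableOn tendsto_id).const_mul (2 / √π)
  rwa [integral_gaussian_Ioi, div_one, div_mul_div_cancel₀ (by positivity),
    div_self two_ne_zero] at h

lemma tendsto_erf_atBot : Tendsto erf atBot (𝓝 (-1)) :=
  (tendsto_erf_atTop.comp tendsto_neg_atBot_atTop).neg.congr fun x => by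
    rw [Function.comp_apply, erf_neg, neg_neg]

end ErrorFunction

section ImproperIntegral

variable {g g' : ℝ → ℝ} {a m l : ℝ}

lemma continuousWithinAt_Ici_update_of_tendsto (hm : Tendsto g (𝓝[>] a) (𝓝 m)) :
    ContinuousWithinAt (Function.update g a m) (Ici a) a := by
  rwa [continuousWithinAt_update_same, Ici_sdiff_left]

lemma hasDerivAt_update_of_mem_Ioi (hderiv : ∀ x ∈ Ioi a, HasDerivAt g (g' x) x) :
    ∀ x ∈ Ioi a, HasDerivAt (Function.update g a m) (g' x) x := fun x hx =>
  (hderiv x hx).congr_of_eventuallyEq <| by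
    filter_upwards [Ioi_mem_nhds hx] with y hy using Function.update_of_ne (ne_of_gt hy) _ _

lemma tendsto_atTop_update (hl : Tendsto g atTop (𝓝 l)) :
    Tendsto (Function.update g a m) atTop (𝓝 l) :=
  hl.congr' <| by
    filter_upwards [Ioi_mem_atTop a] with y hy using (Function.update_of_ne (ne_of_gt hy) _ _).symm

lemma integrableOn_Ioi_deriv_of_nonneg_of_tendsto (hm : Tendsto g (𝓝[>] a) (𝓝 m))
    (hderiv : ∀ x ∈ Ioi a, HasDerivAt g (g' x) x) (hpos : ∀ x ∈ Ioi a, 0 ≤ g' x)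
    (hl : Tendsto g atTop (𝓝 l)) : IntegrableOn g' (Ioi a) :=
  integrableOn_Ioi_deriv_of_nonneg (continuousWithinAt_Ici_update_of_tendsto hm)
    (hasDerivAt_update_of_mem_Ioi hderiv) hpos (tendsto_atTop_update hl)

lemma integral_Ioi_of_hasDerivAt_of_nonneg_of_tendsto (hm : Tendsto g (𝓝[>] a) (𝓝 m))
    (hderiv : ∀ x ∈ Ioi a, HasDerivAt g (g' x) x) (hpos : ∀ x ∈ Ioi a, 0 ≤ g' x)
    (hl : Tendsto g atTop (𝓝 l)) : ∫ x in Ioi a, g' x = l - m := by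
  rw [integral_Ioi_of_hasDerivAt_of_nonneg (continuousWithinAt_Ici_update_of_tendsto hm)
    (hasDerivAt_update_of_mem_Ioi hderiv) hpos (tendsto_atTop_update hl), Function.update_self]

end ImproperIntegral

section LevyDensity

/-- The density at time `t` of the one-sided `1/2`-stable (Lévy) law with parameter `s`, that is
`s / (2 √π t^{3/2}) e^{-s²/(4t)}`, with `t^{3/2}` written as `t √t`. It is the law of the first
hitting time of the level `s` by the Brownian motion with generator `d²/dx²`. -/
noncomputable def levyDensity (s t : ℝ) : ℝ := s / (2 * √π * (t * √t)) * rexp (-s ^ 2 / (4 * t))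

/-- A primitive in `t` of the tilted Lévy density `levyDensity s t * e^{-b² t}`. Its arguments of
`erf` come from `s²/(4t) + b² t = (s/(2√t) ∓ b √t)² ± s b`. -/
noncomputable def tiltedLevyPrimitive (s b t : ℝ) : ℝ :=
  -(rexp (-(s * b)) * erf (s / (2 * √t) - b * √t) +
    rexp (s * b) * erf (s / (2 * √t) + b * √t)) / 2

variable {s b t : ℝ}

lemma levyDensity_nonneg (hs : 0 ≤ s) (ht : 0 ≤ t) : 0 ≤ levyDensity s t := by
  unfold levyDensity
  positivity

lemma measurable_levyDensity : Measurable (Function.uncurry levyDensity) := by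
  unfold levyDensity Function.uncurry
  fun_prop

lemma hasDerivAt_div_two_mul_sqrt (ht : 0 < t) :
    HasDerivAt (fun t => s / (2 * √t)) (-(s / (4 * (t * √t)))) t := by
  have hsqrt : HasDerivAt (fun t => 2 * √t) (2 * (1 / (2 * √t))) t :=
    (hasDerivAt_sqrt ht.ne').const_mul 2
  refine ((hasDerivAt_const t s).div hsqrt (by positivity)).congr_deriv ?_
  rw [mul_pow, sq_sqrt ht.le]
  field_simp
  ring

lemma hasDerivAt_tiltedLevyPrimitive (ht : 0 < t) :
    HasDerivAt (tiltedLevyPrimitive s b) (levyDensity s t * rexp (-(b ^ 2 * t))) t := by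
  have hx := hasDerivAt_div_two_mul_sqrt (s := s) ht
  have hy := (hasDerivAt_sqrt ht.ne').const_mul b
  have hminus := ((hasDerivAt_erf _).comp t (hx.sub hy)).const_mul (rexp (-(s * b)))
  have hplus := ((hasDerivAt_erf _).comp t (hx.add hy)).const_mul (rexp (s * b))
  refine ((hminus.add hplus).neg.div_const 2).congr_deriv ?_
  have hcross : s / (2 * √t) * (b * √t) = s * b / 2 := by field_simp
  have hsum : (s / (2 * √t)) ^ 2 + (b * √t) ^ 2 = s ^ 2 / (4 * t) + b ^ 2 * t := by
    rw [div_pow, mul_pow, mul_pow, sq_sqrt ht.le]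
    norm_num
  have hexp_minus : rexp (-(s * b)) * rexp (-(s / (2 * √t) - b * √t) ^ 2)
      = rexp (-s ^ 2 / (4 * t)) * rexp (-(b ^ 2 * t)) := by
    rw [← Real.exp_add, ← Real.exp_add]
    congr 1
    linear_combination 2 * hcross - hsum
  have hexp_plus : rexp (s * b) * rexp (-(s / (2 * √t) + b * √t) ^ 2)
      = rexp (-s ^ 2 / (4 * t)) * rexp (-(b ^ 2 * t)) := by
    rw [← Real.exp_add, ← Real.exp_add]
    congr 1
    linear_combination -2 * hcross - hsum
  simp only [Pi.sub_apply, Pi.add_apply, levyDensity]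
  linear_combination
    (s / (4 * (t * √t)) + b * (1 / (2 * √t))) / √π * hexp_minus
      + (s / (4 * (t * √t)) - b * (1 / (2 * √t))) / √π * hexp_plus

lemma tendsto_sqrt_nhdsGT_zero : Tendsto (fun t : ℝ => √t) (𝓝[>] 0) (𝓝[>] 0) := by
  refine tendsto_nhdsWithin_iff.2 ⟨?_, ?_⟩
  · simpa only [sqrt_zero] using
      (continuous_sqrt.tendsto 0).mono_left (nhdsWithin_le_nhds (s := Ioi 0))
  · filter_upwards [self_mem_nhdsWithin] with t ht using sqrt_pos.2 ht

lemma tendsto_tiltedLevyPrimitive_nhdsGT_zero (hs : 0 < s) :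
    Tendsto (tiltedLevyPrimitive s b) (𝓝[>] 0) (𝓝 (-cosh (s * b))) := by
  have hx : Tendsto (fun t => s / (2 * √t)) (𝓝[>] 0) atTop := by
    refine ((tendsto_inv_nhdsGT_zero.comp tendsto_sqrt_nhdsGT_zero).const_mul_atTop
      (half_pos hs)).congr fun t => ?_
    rw [Function.comp_apply, ← div_div, div_eq_mul_inv (s / 2)]
  have hy : Tendsto (fun t => b * √t) (𝓝[>] 0) (𝓝 (b * 0)) :=
    (tendsto_sqrt_nhdsGT_zero.mono_right nhdsWithin_le_nhds).const_mul b
  have hminus := tendsto_erf_atTop.comp (hx.atTop_add hy.neg)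
  have hplus := tendsto_erf_atTop.comp (hx.atTop_add hy)
  convert! ((hminus.const_mul (rexp (-(s * b)))).add
    (hplus.const_mul (rexp (s * b)))).neg.div_const 2 using 2
  rw [cosh_eq]
  ring

lemma tendsto_tiltedLevyPrimitive_atTop (hb : 0 ≤ b) :
    Tendsto (tiltedLevyPrimitive s b) atTop (𝓝 (-sinh (s * b))) := by
  have hx : Tendsto (fun t => s / (2 * √t)) atTop (𝓝 0) :=
    tendsto_const_nhds.div_atTop (tendsto_sqrt_atTop.const_mul_atTop two_pos)
  rcases hb.eq_or_lt with rfl | hb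
  · have herf := (continuous_erf.tendsto 0).comp hx
    rw [erf_zero] at herf
    convert! (herf.add herf).neg.div_const 2 using 2 with t
    · simp [tiltedLevyPrimitive]
    · simp
  · have hy : Tendsto (fun t => b * √t) atTop atTop := tendsto_sqrt_atTop.const_mul_atTop hb
    have hminus := tendsto_erf_atBot.comp (hx.add_atBot (tendsto_neg_atTop_atBot.comp hy))
    have hplus := tendsto_erf_atTop.comp (hx.add_atTop hy)
    convert! ((hminus.const_mul (rexp (-(s * b)))).add
      (hplus.const_mul (rexp (s * b)))).neg.div_const 2 using 2
    rw [sinh_eq]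
    ring

lemma levyDensity_mul_exp_nonneg (hs : 0 ≤ s) (ht : 0 ≤ t) :
    0 ≤ levyDensity s t * rexp (-(b ^ 2 * t)) :=
  mul_nonneg (levyDensity_nonneg hs ht) (exp_nonneg _)

lemma integrableOn_levyDensity_mul_exp (hs : 0 < s) (hb : 0 ≤ b) :
    IntegrableOn (fun t => levyDensity s t * rexp (-(b ^ 2 * t))) (Ioi 0) :=
  integrableOn_Ioi_deriv_of_nonneg_of_tendsto (tendsto_tiltedLevyPrimitive_nhdsGT_zero hs)
    (fun _ ht => hasDerivAt_tiltedLevyPrimitive ht)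
    (fun _ ht => levyDensity_mul_exp_nonneg hs.le (le_of_lt ht))
    (tendsto_tiltedLevyPrimitive_atTop hb)

theorem integral_levyDensity_mul_exp (hs : 0 < s) (hb : 0 ≤ b) :
    ∫ t in Ioi 0, levyDensity s t * rexp (-(b ^ 2 * t)) = rexp (-(s * b)) := by
  rw [integral_Ioi_of_hasDerivAt_of_nonneg_of_tendsto (tendsto_tiltedLevyPrimitive_nhdsGT_zero hs)
    (fun _ ht => hasDerivAt_tiltedLevyPrimitive ht)
    (fun _ ht => levyDensity_mul_exp_nonneg hs.le (le_of_lt ht))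
    (tendsto_tiltedLevyPrimitive_atTop hb), ← cosh_sub_sinh]
  ring

end LevyDensity

section LevyMixture

variable {α : Type*} [MeasurableSpace α] {ν : Measure α} [SFinite ν] {σ w : α → ℝ} {b : ℝ}

lemma integrable_levyDensity_mixture (hσ : Measurable σ) (hσpos : ∀ᵐ x ∂ν, 0 < σ x) (hb : 0 ≤ b)
    (hint : Integrable (fun x => rexp (-(σ x * b)) * w x) ν) :
    Integrable (Function.uncurry fun t x => levyDensity (σ x) t * rexp (-(b ^ 2 * t)) * w x)
      ((volume.restrict (Ioi 0)).prod ν) := by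
  have hw : AEStronglyMeasurable w ν := by
    have hexp : Measurable fun x => rexp (σ x * b) := by fun_prop
    refine (hexp.aestronglyMeasurable.mul hint.aestronglyMeasurable).congr (ae_of_all _ fun x => ?_)
    rw [Pi.mul_apply, ← mul_assoc, ← Real.exp_add, add_neg_cancel, Real.exp_zero, one_mul]
  have hmeas : AEStronglyMeasurable
      (Function.uncurry fun t x => levyDensity (σ x) t * rexp (-(b ^ 2 * t)) * w x)
      ((volume.restrict (Ioi 0)).prod ν) := by
    have hlevy : Measurable fun p : ℝ × α => levyDensity (σ p.2) p.1 :=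
      measurable_levyDensity.comp ((hσ.comp measurable_snd).prodMk measurable_fst)
    exact (hlevy.mul (by fun_prop)).aestronglyMeasurable.mul hw.comp_snd
  refine (integrable_prod_iff' hmeas).2 ⟨?_, hint.norm.congr ?_⟩
  · filter_upwards [hσpos] with x hx
    exact (integrableOn_levyDensity_mul_exp hx hb).mul_const (w x)
  · filter_upwards [hσpos] with x hx
    rw [norm_mul, norm_of_nonneg (exp_nonneg _), ← integral_levyDensity_mul_exp hx hb,
      ← integral_mul_const]
    refine setIntegral_congr_fun measurableSet_Ioi fun t ht => ?_
    rw [Function.uncurry_apply_pair, norm_mul,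
      norm_of_nonneg (levyDensity_mul_exp_nonneg hx.le (le_of_lt ht))]

theorem integral_levyDensity_mixture (hσ : Measurable σ) (hσpos : ∀ᵐ x ∂ν, 0 < σ x) (hb : 0 ≤ b)
    (hint : Integrable (fun x => rexp (-(σ x * b)) * w x) ν) :
    ∫ t in Ioi 0, ∫ x, levyDensity (σ x) t * rexp (-(b ^ 2 * t)) * w x ∂ν
      = ∫ x, rexp (-(σ x * b)) * w x ∂ν := by
  rw [integral_integral_swap (integrable_levyDensity_mixture hσ hσpos hb hint)]
  refine integral_congr_ae ?_
  filter_upwards [hσpos] with x hx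
  rw [integral_mul_const, integral_levyDensity_mul_exp hx hb]

end LevyMixture

section ToroidalFunction

/-- The toroidal function `Q_{μ-1/2}(cosh c)`: the Legendre function of the second kind of degree
`λ = μ - 1/2` at `cosh c`, through its integral representation for `c > 0` and `μ > -1/2`. -/
noncomputable def toroidalQ (μ c : ℝ) : ℝ :=
  ∫ u in Ioi c, rexp (-u * μ) / √(2 * cosh u - 2 * cosh c)

variable {μ b c x : ℝ}

lemma sinh_mul_exp_sub_one_le_cosh_add_sub_cosh (c x : ℝ) :
    sinh c * (rexp x - 1) ≤ cosh (x + c) - cosh c := by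
  have hcosh_sub_sinh : 0 ≤ (cosh c - sinh c) * (cosh x - 1) :=
    mul_nonneg (sub_nonneg.2 (sinh_lt_cosh c).le) (sub_nonneg.2 (one_le_cosh x))
  rw [cosh_add, ← cosh_add_sinh]
  linarith

lemma inv_sqrt_exp_sub_one_le (hx : 0 < x) :
    (√(rexp x - 1))⁻¹ ≤ rexp (-(x / 2)) * ((√x)⁻¹ + 1) := by
  have hexp : 1 + x ≤ rexp x := by linarith [add_one_le_exp x]
  rw [← sqrt_inv, sqrt_le_left (by positivity)]
  calc (rexp x - 1)⁻¹ ≤ (rexp x)⁻¹ * (x⁻¹ + 1) := by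
        rw [inv_le_iff_one_le_mul₀ (by linarith)]
        field_simp
        nlinarith
    _ = (rexp (-(x / 2))) ^ 2 * ((√x)⁻¹ ^ 2 + 1) := by
        rw [← exp_nat_mul, inv_pow, sq_sqrt hx.le, ← Real.exp_neg]
        congr 2
        push_cast
        ring
    _ ≤ (rexp (-(x / 2)) * ((√x)⁻¹ + 1)) ^ 2 := by
        rw [mul_pow]
        gcongr
        nlinarith [inv_nonneg.2 (sqrt_nonneg x)]

lemma integrableOn_exp_mul_inv_sqrt_add_one (hb : 0 < b) :
    IntegrableOn (fun x : ℝ => rexp (-b * x) * ((√x)⁻¹ + 1)) (Ioi 0) := by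
  have hsqrt := integrableOn_rpow_mul_exp_neg_mul_rpow (s := -(1 / 2)) (by norm_num) one_pos hb
  refine (hsqrt.add (exp_neg_integrableOn_Ioi 0 hb)).congr_fun (fun x hx => ?_) measurableSet_Ioi
  rw [Pi.add_apply, rpow_one, rpow_neg (le_of_lt hx), ← sqrt_eq_rpow]
  ring

lemma toroidalQ_integrand_le (hc : 0 < c) (hx : 0 < x) :
    rexp (-(x + c) * μ) / √(2 * cosh (x + c) - 2 * cosh c)
      ≤ rexp (-c * μ) / √(2 * sinh c) * (rexp (-(μ + 1 / 2) * x) * ((√x)⁻¹ + 1)) := by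
  have hsinh : 0 < sinh c := sinh_pos_iff.2 hc
  have hexp : 0 < rexp x - 1 := sub_pos.2 (one_lt_exp_iff.2 hx)
  have hsqrt : √(2 * sinh c) * √(rexp x - 1) ≤ √(2 * cosh (x + c) - 2 * cosh c) := by
    rw [← sqrt_mul (mul_pos two_pos hsinh).le]
    exact sqrt_le_sqrt (by linarith [sinh_mul_exp_sub_one_le_cosh_add_sub_cosh c x])
  calc rexp (-(x + c) * μ) / √(2 * cosh (x + c) - 2 * cosh c)
      ≤ rexp (-(x + c) * μ) / (√(2 * sinh c) * √(rexp x - 1)) := by gcongr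
    _ = rexp (-c * μ) / √(2 * sinh c) * (rexp (-(μ * x)) * (√(rexp x - 1))⁻¹) := by
        rw [show -(x + c) * μ = -c * μ + -(μ * x) by ring, Real.exp_add]
        ring
    _ ≤ rexp (-c * μ) / √(2 * sinh c) *
          (rexp (-(μ * x)) * (rexp (-(x / 2)) * ((√x)⁻¹ + 1))) := by
        gcongr
        exact inv_sqrt_exp_sub_one_le hx
    _ = rexp (-c * μ) / √(2 * sinh c) * (rexp (-(μ + 1 / 2) * x) * ((√x)⁻¹ + 1)) := by
        rw [← mul_assoc (rexp _), ← Real.exp_add]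
        congr 4
        ring

lemma integrableOn_toroidalQ_integrand (hc : 0 < c) (hμ : -(1 / 2) < μ) :
    IntegrableOn (fun u => rexp (-u * μ) / √(2 * cosh u - 2 * cosh c)) (Ioi c) := by
  have hshift := (measurePreserving_add_right volume c).integrableOn_comp_preimage
    (measurableEmbedding_addRight c) (s := Ioi c)
    (f := fun u => rexp (-u * μ) / √(2 * cosh u - 2 * cosh c))
  rw [preimage_add_const_Ioi, sub_self] at hshift
  have hbound := (integrableOn_exp_mul_inv_sqrt_add_one
    (neg_lt_iff_pos_add.1 hμ)).const_mul (rexp (-c * μ) / √(2 * sinh c))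
  refine hshift.1 (Integrable.mono' hbound (Measurable.aestronglyMeasurable (by fun_prop)) ?_)
  filter_upwards [ae_restrict_mem measurableSet_Ioi] with x hx
  rw [Function.comp_apply, norm_of_nonneg (by positivity)]
  exact toroidalQ_integrand_le hc hx

end ToroidalFunction

section HyperbolicHeatKernel

/-- The heat kernel `K_t(r)` of the hyperbolic plane `ℍ²_κ` of curvature `-κ²`, at geodesic
distance `r` and time `t`. -/
noncomputable def hyperbolicHeatKernel (κ t r : ℝ) : ℝ :=
  (√2 / κ) * (4 * π * t) ^ (-(3 : ℝ) / 2) * rexp (-κ ^ 2 * t / 4) *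
    ∫ s in Ioi (κ * r), s * rexp (-s ^ 2 / (4 * κ ^ 2 * t)) / √(cosh s - cosh (κ * r))

variable {κ r t μ : ℝ}

lemma rpow_neg_three_halves {x : ℝ} (hx : 0 < x) : x ^ (-(3 : ℝ) / 2) = (x * √x)⁻¹ := by
  rw [neg_div, rpow_neg hx.le, show (3 : ℝ) / 2 = 1 + 1 / 2 by norm_num, rpow_add hx, rpow_one,
    sqrt_eq_rpow]

lemma hyperbolicHeatKernel_eq_integral_levyDensity (hκ : κ ≠ 0) (ht : 0 < t) :
    hyperbolicHeatKernel κ t r = 1 / (2 * π) * (rexp (-κ ^ 2 * t / 4) *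
      ∫ s in Ioi (κ * r), levyDensity (s / κ) t * (√(2 * cosh s - 2 * cosh (κ * r)))⁻¹) := by
  rw [hyperbolicHeatKernel, ← integral_const_mul, ← integral_const_mul, ← integral_const_mul]
  congr 1 with s
  have hsqrt_four : √(4 * π * t) = 2 * √π * √t := by
    rw [sqrt_mul (by positivity), sqrt_mul (by positivity), show (4 : ℝ) = 2 ^ 2 by norm_num,
      sqrt_sq two_pos.le]
  have hexponent : -(s / κ) ^ 2 / (4 * t) = -s ^ 2 / (4 * κ ^ 2 * t) := by field_simp
  rw [levyDensity, hexponent, rpow_neg_three_halves (by positivity), hsqrt_four, ← mul_sub,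
    sqrt_mul two_pos.le]
  have h2 : √2 ^ 2 = 2 := sq_sqrt two_pos.le
  field_simp
  rw [h2]
  ring

lemma exp_mul_hyperbolicHeatKernel_eq_integral (hκ : κ ≠ 0) (ht : 0 < t) :
    rexp (-(κ ^ 2 * (μ ^ 2 - 1 / 4)) * t) * hyperbolicHeatKernel κ t r
      = 1 / (2 * π) * ∫ s in Ioi (κ * r), levyDensity (s / κ) t *
          rexp (-((κ * μ) ^ 2 * t)) * (√(2 * cosh s - 2 * cosh (κ * r)))⁻¹ := by
  have hexp : rexp (-((κ * μ) ^ 2 * t))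
      = rexp (-(κ ^ 2 * (μ ^ 2 - 1 / 4)) * t) * rexp (-κ ^ 2 * t / 4) := by
    rw [← Real.exp_add]
    congr 1
    ring
  rw [hyperbolicHeatKernel_eq_integral_levyDensity hκ ht, mul_left_comm, ← mul_assoc (rexp _),
    ← hexp, ← integral_const_mul]
  simp only [mul_left_comm (rexp (-((κ * μ) ^ 2 * t))), mul_assoc]

theorem integral_exp_mul_hyperbolicHeatKernel (hκ : 0 < κ) (hr : 0 < r) (hμ : 0 ≤ μ) :
    ∫ t in Ioi 0, rexp (-(κ ^ 2 * (μ ^ 2 - 1 / 4)) * t) * hyperbolicHeatKernel κ t r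
      = 1 / (2 * π) * toroidalQ μ (κ * r) := by
  have hc : 0 < κ * r := mul_pos hκ hr
  have hpos : ∀ᵐ s ∂volume.restrict (Ioi (κ * r)), 0 < s / κ := by
    filter_upwards [ae_restrict_mem measurableSet_Ioi] with s hs using div_pos (hc.trans hs) hκ
  have hintegrand (s : ℝ) : rexp (-(s / κ * (κ * μ))) * (√(2 * cosh s - 2 * cosh (κ * r)))⁻¹
      = rexp (-s * μ) / √(2 * cosh s - 2 * cosh (κ * r)) := by
    rw [div_eq_mul_inv _ √_, ← mul_assoc, div_mul_cancel₀ s hκ.ne', neg_mul]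
  have hint : IntegrableOn (fun s => rexp (-(s / κ * (κ * μ))) *
      (√(2 * cosh s - 2 * cosh (κ * r)))⁻¹) (Ioi (κ * r)) := by
    simp_rw [hintegrand]
    exact integrableOn_toroidalQ_integrand hc (by linarith)
  calc ∫ t in Ioi 0, rexp (-(κ ^ 2 * (μ ^ 2 - 1 / 4)) * t) * hyperbolicHeatKernel κ t r
      = 1 / (2 * π) * ∫ t in Ioi 0, ∫ s in Ioi (κ * r), levyDensity (s / κ) t *
          rexp (-((κ * μ) ^ 2 * t)) * (√(2 * cosh s - 2 * cosh (κ * r)))⁻¹ := by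
        rw [← integral_const_mul]
        exact setIntegral_congr_fun measurableSet_Ioi fun t ht =>
          exp_mul_hyperbolicHeatKernel_eq_integral hκ.ne' ht
    _ = 1 / (2 * π) * toroidalQ μ (κ * r) := by
        rw [integral_levyDensity_mixture (by fun_prop) hpos (by positivity) hint]
        simp_rw [hintegrand, toroidalQ]

end HyperbolicHeatKernel

theorem offdiag_principal_matrix_H2_general (κ r a : ℝ) (hκ : 0 < κ) (hr : 0 < r)
    (ha : -(κ ^ 2 / 4) ≤ a) :
    ∫ t in Ioi (0 : ℝ), rexp (-a * t) * hyperbolicHeatKernel κ t r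
      = 1 / (2 * π) * toroidalQ √(1 / 4 + a / κ ^ 2) (κ * r) := by
  have hradicand : 0 ≤ 1 / 4 + a / κ ^ 2 := by
    rw [← neg_le_iff_add_nonneg', le_div_iff₀ (by positivity)]
    linarith
  have ha_eq : a = κ ^ 2 * (√(1 / 4 + a / κ ^ 2) ^ 2 - 1 / 4) := by
    rw [sq_sqrt hradicand]
    field_simp
    ring
  rw [← integral_exp_mul_hyperbolicHeatKernel hκ hr (sqrt_nonneg _), ← ha_eq]

/-- The off-diagonal entry of the principal matrix on the hyperbolic plane `ℍ²_κ`
at energy `z = -a` equals `(1/(2π))` times the Legendre function of the second kind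
`Q_λ(cosh (κ r))` in its integral representation: for `κ, r, a > 0`,
`∫₀^∞ e^{-a t} K_t(r) dt
  = (1/(2π)) ∫_{κ r}^∞ e^{-u √(1/4 + a/κ²)} / √(2 cosh u - 2 cosh (κ r)) du`,
where `K_t(r)` is the heat kernel of `ℍ²_κ`. -/
theorem offdiag_principal_matrix_H2 (κ r a : ℝ) (hκ : 0 < κ) (hr : 0 < r) (ha : 0 < a) :
    ∫ t in Ioi (0 : ℝ),
        Real.exp (-a * t) *
          ((Real.sqrt 2 / κ) * (4 * π * t) ^ (-(3 : ℝ) / 2) * Real.exp (-κ ^ 2 * t / 4) *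
            ∫ s in Ioi (κ * r),
              s * Real.exp (-s ^ 2 / (4 * κ ^ 2 * t)) /
                Real.sqrt (Real.cosh s - Real.cosh (κ * r)))
      = (1 / (2 * π)) *
          ∫ u in Ioi (κ * r),
            Real.exp (-u * Real.sqrt (1 / 4 + a / κ ^ 2)) /
              Real.sqrt (2 * Real.cosh u - 2 * Real.cosh (κ * r)) :=
  offdiag_principal_matrix_H2_general κ r a hκ hr (by linarith [sq_nonneg κ])
end

section
/- For every κ > 0 and all μ, ν > 0, one has ∫₀^∞ K_t(0) (e^{−μ² t} − e^{−ν² t}) dt = (1/(2π)) ∫₀^∞ (e^{−t (1/2 + √(1/4 + μ²/κ²))} − e^{−t (1/2 + √(1/4 + ν²/κ²))}) / (1 − e^{−t}) dt, where K_t(0) = (√2/κ)(4π t)^{−3/2} e^{−κ² t/4} ∫_0^∞ s e^{−s²/(4κ² t)} / √(cosh s − 1) ds is the diagonal heat kernel of the hyperbolic plane ℍ²_κ. That is, the diagonal entry of the principal matrix on the hyperbolic plane equals (1/(2π))(ψ(1/2 + √(ν²/κ² + 1/4)) − ψ(1/2 + √(μ²/κ² + 1/4))) with the digamma function ψ expressed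 through its integral representation. -/
open Real MeasureTheory Set

/-! Integrating in `t` first reduces the identity to the Laplace transform of the inverse Gaussian
density `t^(-3/2) e^{-q²/t}`, whose primitive is a combination of error functions: for every fixed
`s` the kernel contributes `e^{-δ s} / (2π (1 - e^{-s}))`, where `δ (δ - 1) = μ²/κ²`. A single such
term is not integrable at `s = 0`. The difference of two is, and it has constant sign, so Tonelli's
theorem justifies the exchange of the integrals. -/

open Filter Topology

theorem integral_Ioi_of_hasDerivAt_of_nonneg_of_tendsto_s4 {F F' : ℝ → ℝ} {a L M : ℝ}
    (hderiv : ∀ x ∈ Ioi a, HasDerivAt F (F' x) x) (hnonneg : ∀ x ∈ Ioi a, 0 ≤ F' x)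
    (hleft : Tendsto F (𝓝[>] a) (𝓝 L)) (htop : Tendsto F atTop (𝓝 M)) :
    ∫ x in Ioi a, F' x = M - L := by
  have heq {x : ℝ} (hx : a < x) : Function.update F a L x = F x :=
    Function.update_of_ne hx.ne' _ _
  have hcont : ContinuousWithinAt (Function.update F a L) (Ici a) a := by
    rwa [continuousWithinAt_update_same, Ici_sdiff_left]
  have hderiv' : ∀ x ∈ Ioi a, HasDerivAt (Function.update F a L) (F' x) x := fun x hx =>
    (hderiv x hx).congr_of_eventuallyEq <| eventually_of_mem (Ioi_mem_nhds hx) fun _ => heq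
  have htop' : Tendsto (Function.update F a L) atTop (𝓝 M) :=
    htop.congr' <| (eventually_gt_atTop a).mono fun _ hx => (heq hx).symm
  rw [integral_Ioi_of_hasDerivAt_of_nonneg hcont hderiv' hnonneg htop', Function.update_self]

section GaussianPrimitive

/-- The error function without its factor `2 / √π`, used to write down an explicit
primitive of the inverse Gaussian density. -/
noncomputable def gaussianPrimitive (x : ℝ) : ℝ := ∫ u in (0 : ℝ)..x, exp (-u ^ 2)

theorem hasDerivAt_gaussianPrimitive (x : ℝ) :
    HasDerivAt gaussianPrimitive (exp (-x ^ 2)) x :=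
  (by fun_prop : Continuous fun u : ℝ => exp (-u ^ 2)).integral_hasStrictDerivAt 0 x
    |>.hasDerivAt

theorem gaussianPrimitive_zero : gaussianPrimitive 0 = 0 :=
  intervalIntegral.integral_same

theorem gaussianPrimitive_neg (x : ℝ) : gaussianPrimitive (-x) = -gaussianPrimitive x := by
  have h := intervalIntegral.integral_comp_neg (a := x) (b := 0) fun u : ℝ => exp (-u ^ 2)
  simp only [neg_sq, neg_zero] at h
  rw [gaussianPrimitive, ← h, intervalIntegral.integral_symm, gaussianPrimitive]

theorem tendsto_gaussianPrimitive_atTop : Tendsto gaussianPrimitive atTop (𝓝 (√π / 2)) := by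
  have hint : Integrable fun x : ℝ => exp (-x ^ 2) := by
    simpa using integrable_exp_neg_mul_sq one_pos
  have hval : ∫ x in Ioi (0 : ℝ), exp (-x ^ 2) = √π / 2 := by
    simpa using integral_gaussian_Ioi 1
  exact hval ▸ intervalIntegral_tendsto_integral_Ioi 0 hint.integrableOn tendsto_id

theorem tendsto_gaussianPrimitive_atBot :
    Tendsto gaussianPrimitive atBot (𝓝 (-(√π / 2))) := by
  refine (tendsto_gaussianPrimitive_atTop.comp tendsto_neg_atBot_atTop).neg.congr fun x => ?_
  rw [Function.comp_apply, gaussianPrimitive_neg, neg_neg]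

end GaussianPrimitive

section InverseGaussian

/-- The primitives of the unnormalised inverse Gaussian density
`t ↦ q t^(-3/2) e^{-(p² t + q²/t)}` come from completing the square in its exponent, which can be
done with either sign of `p`: minus the sum of this function for `p` and for `-p` is one of them. -/
noncomputable def inverseGaussianBranch (p q t : ℝ) : ℝ :=
  exp (2 * p * q) * gaussianPrimitive (q * t ^ (-(1 / 2) : ℝ) + p * t ^ (1 / 2 : ℝ))

theorem exp_mul_exp_neg_sq_add (p q : ℝ) {t : ℝ} (ht : 0 < t) :
    exp (2 * p * q) * exp (-(q * t ^ (-(1 / 2) : ℝ) + p * t ^ (1 / 2 : ℝ)) ^ 2) =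
      exp (-(p ^ 2 * t + q ^ 2 / t)) := by
  have hsqrt : √t ≠ 0 := (sqrt_pos.2 ht).ne'
  rw [← exp_add, rpow_neg ht.le, ← sqrt_eq_rpow]
  congr 1
  field_simp
  rw [sq_sqrt ht.le]
  ring

theorem hasDerivAt_inverseGaussianBranch (p q : ℝ) {t : ℝ} (ht : 0 < t) :
    HasDerivAt (inverseGaussianBranch p q)
      (exp (-(p ^ 2 * t + q ^ 2 / t)) *
        (p / 2 * t ^ (-(1 : ℝ) / 2) - q / 2 * t ^ (-(3 : ℝ) / 2))) t := by
  have hpow (r : ℝ) : HasDerivAt (fun t : ℝ => t ^ r) (r * t ^ (r - 1)) t :=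
    hasDerivAt_rpow_const (Or.inl ht.ne')
  have harg := ((hpow (-(1 / 2))).const_mul q).fun_add ((hpow (1 / 2)).const_mul p)
  have hcomp := ((hasDerivAt_gaussianPrimitive _).comp t harg).const_mul (exp (2 * p * q))
  refine hcomp.congr_deriv ?_
  rw [← mul_assoc, exp_mul_exp_neg_sq_add p q ht]
  ring_nf

theorem tendsto_inverseGaussianBranch_nhdsGT_zero (p : ℝ) {q : ℝ} (hq : 0 < q) :
    Tendsto (inverseGaussianBranch p q) (𝓝[>] 0) (𝓝 (exp (2 * p * q) * (√π / 2))) := by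
  have hp0 : Tendsto (fun t : ℝ => p * t ^ (1 / 2 : ℝ)) (𝓝[>] 0) (𝓝 0) := by
    have h := (continuousAt_rpow_const 0 (1 / 2) (Or.inr (by norm_num))).tendsto.const_mul p
    simp only [zero_rpow (one_div_ne_zero (two_ne_zero' ℝ)), mul_zero] at h
    exact h.mono_left nhdsWithin_le_nhds
  have hqtop : Tendsto (fun t : ℝ => q * t ^ (-(1 / 2) : ℝ)) (𝓝[>] 0) atTop :=
    (tendsto_rpow_neg_nhdsGT_zero (by norm_num)).const_mul_atTop hq
  exact (tendsto_gaussianPrimitive_atTop.comp (hqtop.atTop_add hp0)).const_mul _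

theorem tendsto_inverseGaussianBranch_atTop (p q : ℝ) :
    Tendsto (inverseGaussianBranch p q) atTop
      (𝓝 (exp (2 * p * q) * (Real.sign p * (√π / 2)))) := by
  have hq0 : Tendsto (fun t : ℝ => q * t ^ (-(1 / 2) : ℝ)) atTop (𝓝 0) := by
    simpa only [mul_zero] using (tendsto_rpow_neg_atTop one_half_pos).const_mul q
  have hsqrt : Tendsto (fun t : ℝ => t ^ (1 / 2 : ℝ)) atTop atTop :=
    tendsto_rpow_atTop one_half_pos
  refine Tendsto.const_mul _ ?_
  rcases lt_trichotomy p 0 with hp | rfl | hp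
  · rw [Real.sign_of_neg hp, neg_one_mul]
    exact tendsto_gaussianPrimitive_atBot.comp (hq0.add_atBot (hsqrt.const_mul_atTop_of_neg hp))
  · simp only [Real.sign_zero, zero_mul, add_zero]
    exact gaussianPrimitive_zero ▸
      (hasDerivAt_gaussianPrimitive 0).continuousAt.tendsto.comp hq0
  · rw [Real.sign_of_pos hp, one_mul]
    exact tendsto_gaussianPrimitive_atTop.comp (hq0.add_atTop (hsqrt.const_mul_atTop hp))

theorem integral_rpow_mul_exp_neg_mul_add_div (p : ℝ) {q : ℝ} (hq : 0 < q) :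
    ∫ t in Ioi (0 : ℝ), t ^ (-(3 : ℝ) / 2) * exp (-(p ^ 2 * t + q ^ 2 / t)) =
      √π / q * exp (-(2 * |p| * q)) := by
  have hderiv : ∀ t ∈ Ioi (0 : ℝ),
      HasDerivAt (-(inverseGaussianBranch p q + inverseGaussianBranch (-p) q))
        (q * (t ^ (-(3 : ℝ) / 2) * exp (-(p ^ 2 * t + q ^ 2 / t)))) t := fun t ht => by
    refine ((hasDerivAt_inverseGaussianBranch p q ht).add
      (hasDerivAt_inverseGaussianBranch (-p) q ht)).neg.congr_deriv ?_
    rw [neg_sq]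
    ring
  have hnonneg : ∀ t ∈ Ioi (0 : ℝ),
      0 ≤ q * (t ^ (-(3 : ℝ) / 2) * exp (-(p ^ 2 * t + q ^ 2 / t))) := fun t ht => by
    have := mem_Ioi.1 ht
    positivity
  have hint := integral_Ioi_of_hasDerivAt_of_nonneg_of_tendsto_s4 hderiv hnonneg
    ((tendsto_inverseGaussianBranch_nhdsGT_zero p hq).add
      (tendsto_inverseGaussianBranch_nhdsGT_zero (-p) hq)).neg
    ((tendsto_inverseGaussianBranch_atTop p q).add
      (tendsto_inverseGaussianBranch_atTop (-p) q)).neg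
  rw [integral_const_mul] at hint
  rw [div_mul_eq_mul_div, eq_div_iff hq.ne', mul_comm, hint, Real.sign_neg]
  rcases lt_trichotomy p 0 with hp | rfl | hp
  · rw [Real.sign_of_neg hp, abs_of_neg hp]
    ring_nf
  · simp
  · rw [Real.sign_of_pos hp, abs_of_pos hp]
    ring_nf

end InverseGaussian

theorem integrable_prod_of_nonneg_of_integrable_integral {α β : Type*} [MeasurableSpace α]
    [MeasurableSpace β] {μ : Measure α} {ν : Measure β} [SFinite μ] [SFinite ν] {f : α × β → ℝ}
    (hmeas : AEStronglyMeasurable f (μ.prod ν)) (hnonneg : ∀ᵐ y ∂ν, ∀ᵐ x ∂μ, 0 ≤ f (x, y))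
    (hslice : ∀ᵐ y ∂ν, Integrable (fun x => f (x, y)) μ)
    (hint : Integrable (fun y => ∫ x, f (x, y) ∂μ) ν) : Integrable f (μ.prod ν) := by
  refine (integrable_prod_iff' hmeas).2 ⟨hslice, hint.congr ?_⟩
  filter_upwards [hnonneg] with y hy
  exact integral_congr_ae (hy.mono fun x hx => (norm_of_nonneg hx).symm)

section DigammaIntegrand

theorem one_sub_exp_neg_pos {t : ℝ} (ht : 0 < t) : 0 < 1 - exp (-t) :=
  sub_pos.2 (exp_lt_one_iff.2 (neg_lt_zero.2 ht))

theorem one_sub_exp_neg_mul_le {c t : ℝ} (hc : 0 ≤ c) (ht : 0 ≤ t) :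
    1 - exp (-t * c) ≤ (c + 1) * (1 - exp (-t)) := by
  have hbernoulli : 1 + (c + 1) * (exp (-t) - 1) ≤ exp (-t * (c + 1)) := by
    rw [exp_mul, ← add_sub_cancel 1 (exp (-t))]
    simpa only [add_sub_cancel] using one_add_mul_self_le_rpow_one_add
      (by linarith [exp_pos (-t)] : -1 ≤ exp (-t) - 1) (by linarith : 1 ≤ c + 1)
  have hmono : exp (-t * (c + 1)) ≤ exp (-t * c) := exp_le_exp.2 (by linarith)
  linarith

theorem integrableOn_exp_sub_exp_div_one_sub_exp {x y : ℝ} (hx : 0 < x) (hy : 0 < y) :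
    IntegrableOn (fun t => (exp (-t * x) - exp (-t * y)) / (1 - exp (-t))) (Ioi 0) := by
  wlog hxy : x ≤ y generalizing x y
  · refine (this hy hx (le_of_not_ge hxy)).neg.congr (ae_of_all _ fun t => ?_)
    rw [Pi.neg_apply, ← neg_div, neg_sub]
  have hbound : IntegrableOn (fun t => (y - x + 1) * exp (-x * t)) (Ioi 0) :=
    (integrableOn_exp_mul_Ioi (neg_lt_zero.2 hx) 0).const_mul _
  refine hbound.mono' (Measurable.aestronglyMeasurable (by fun_prop)) ?_
  filter_upwards [ae_restrict_mem measurableSet_Ioi] with t (ht : 0 < t)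
  have hden : 0 < 1 - exp (-t) := one_sub_exp_neg_pos ht
  have hnum : exp (-t * y) ≤ exp (-t * x) :=
    exp_le_exp.2 (mul_le_mul_of_nonpos_left hxy (neg_nonpos.2 ht.le))
  rw [norm_of_nonneg (div_nonneg (sub_nonneg.2 hnum) hden.le), div_le_iff₀ hden]
  calc exp (-t * x) - exp (-t * y)
      = exp (-x * t) * (1 - exp (-t * (y - x))) := by
        rw [mul_sub, ← exp_add]
        ring_nf
    _ ≤ exp (-x * t) * ((y - x + 1) * (1 - exp (-t))) := by
        gcongr
        exact one_sub_exp_neg_mul_le (sub_nonneg.2 hxy) ht.le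
    _ = (y - x + 1) * exp (-x * t) * (1 - exp (-t)) := by ring

end DigammaIntegrand

section HeatKernel

/-- The diagonal heat kernel `K_t(0)` of the hyperbolic plane of curvature `-κ²`. -/
noncomputable def diagHeatKernel (κ t : ℝ) : ℝ :=
  (√2 / κ) * (4 * π * t) ^ (-(3 : ℝ) / 2) * exp (-κ ^ 2 * t / 4) *
    ∫ s in Ioi (0 : ℝ), s * exp (-s ^ 2 / (4 * κ ^ 2 * t)) / √(cosh s - 1)

/-- The integrand of `diagHeatKernel κ t`, with the prefactor moved under the integral sign. -/
noncomputable def diagHeatIntegrand (κ t s : ℝ) : ℝ :=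
  (√2 / κ) * (4 * π * t) ^ (-(3 : ℝ) / 2) * exp (-κ ^ 2 * t / 4) *
    (s * exp (-s ^ 2 / (4 * κ ^ 2 * t)) / √(cosh s - 1))

/-- The root `δ ≥ 1/2` of `κ² δ (δ - 1) = m`: the resolvent of the Laplacian at `-m` decays like
`e^{-δ κ r}` on the hyperbolic plane of curvature `-κ²`. It is that root only for `-κ²/4 ≤ m`, where
`κ²/4` is the bottom of the spectrum: below, `√` takes the junk value `0`. -/
noncomputable def spectralParameter (κ m : ℝ) : ℝ := 1 / 2 + √(1 / 4 + m / κ ^ 2)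

theorem spectralParameter_pos (κ m : ℝ) : 0 < spectralParameter κ m :=
  add_pos_of_pos_of_nonneg one_half_pos (sqrt_nonneg _)

theorem sq_mul_sqrt_quarter_add_div {κ m : ℝ} (hκ : κ ≠ 0) (hm : -(κ ^ 2 / 4) ≤ m) :
    (κ * √(1 / 4 + m / κ ^ 2)) ^ 2 = κ ^ 2 / 4 + m := by
  have heq : 1 / 4 + m / κ ^ 2 = (κ ^ 2 / 4 + m) / κ ^ 2 := by field_simp
  rw [mul_pow, heq, sq_sqrt (div_nonneg (by linarith) (sq_nonneg κ)),
    mul_div_cancel₀ _ (pow_ne_zero 2 hκ)]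

theorem diagHeatKernel_eq_integral (κ t : ℝ) :
    diagHeatKernel κ t = ∫ s in Ioi (0 : ℝ), diagHeatIntegrand κ t s :=
  (integral_const_mul _ _).symm

theorem diagHeatIntegrand_nonneg {κ t s : ℝ} (hκ : 0 ≤ κ) (ht : 0 ≤ t) (hs : 0 ≤ s) :
    0 ≤ diagHeatIntegrand κ t s := by
  unfold diagHeatIntegrand
  positivity

theorem measurable_diagHeatIntegrand (κ : ℝ) :
    Measurable fun z : ℝ × ℝ => diagHeatIntegrand κ z.1 z.2 := by
  unfold diagHeatIntegrand
  fun_prop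

theorem sqrt_cosh_sub_one {s : ℝ} (hs : 0 ≤ s) :
    √(cosh s - 1) = exp (s / 2) * (1 - exp (-s)) / √2 := by
  have hnonneg : 0 ≤ exp (s / 2) * (1 - exp (-s)) :=
    mul_nonneg (exp_pos _).le (sub_nonneg.2 (exp_le_one_iff.2 (neg_nonpos.2 hs)))
  have hsq : cosh s - 1 = (exp (s / 2) * (1 - exp (-s))) ^ 2 / 2 := by
    have hexp : exp (s / 2) ^ 2 = exp s := by
      rw [← exp_nat_mul]
      congr 1
      push_cast
      ring
    rw [mul_pow, hexp, cosh_eq, exp_neg]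
    field_simp
    ring
  rw [hsq, sqrt_div (sq_nonneg _), sqrt_sq hnonneg]

theorem four_mul_pi_rpow_neg_three_halves :
    (4 * π) ^ (-(3 : ℝ) / 2) = 1 / (8 * π * √π) := by
  have hpos : 0 < 4 * π := by positivity
  have hsqrt : √(4 * π) = 2 * √π := by
    rw [sqrt_mul zero_le_four, show (4 : ℝ) = 2 ^ 2 by norm_num, sqrt_sq zero_le_two]
  rw [show -(3 : ℝ) / 2 = -(1 + 1 / 2) by norm_num, rpow_neg hpos.le, rpow_add hpos, rpow_one,
    ← sqrt_eq_rpow, hsqrt, one_div]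
  ring

theorem diagHeatIntegrand_mul_exp {κ t : ℝ} (m s : ℝ) (hκ : κ ≠ 0) (ht : 0 < t) :
    diagHeatIntegrand κ t s * exp (-m * t) =
      √2 / κ * (4 * π) ^ (-(3 : ℝ) / 2) * (s / √(cosh s - 1)) *
        (t ^ (-(3 : ℝ) / 2) * exp (-((κ ^ 2 / 4 + m) * t + (s / (2 * κ)) ^ 2 / t))) := by
  have hexp : exp (-((κ ^ 2 / 4 + m) * t + (s / (2 * κ)) ^ 2 / t)) =
      exp (-κ ^ 2 * t / 4) * exp (-s ^ 2 / (4 * κ ^ 2 * t)) * exp (-m * t) := by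
    rw [← exp_add, ← exp_add]
    congr 1
    field_simp
    ring
  rw [diagHeatIntegrand, hexp, mul_rpow (by positivity) ht.le]
  ring

theorem integral_diagHeatIntegrand_mul_exp {κ m s : ℝ} (hκ : 0 < κ) (hm : -(κ ^ 2 / 4) ≤ m)
    (hs : 0 < s) :
    ∫ t in Ioi (0 : ℝ), diagHeatIntegrand κ t s * exp (-m * t) =
      1 / (2 * π) * (exp (-s * spectralParameter κ m) / (1 - exp (-s))) := by
  rw [setIntegral_congr_fun measurableSet_Ioi
    fun t ht => diagHeatIntegrand_mul_exp m s hκ.ne' ht, integral_const_mul,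
    ← sq_mul_sqrt_quarter_add_div hκ.ne' hm,
    integral_rpow_mul_exp_neg_mul_add_div _ (by positivity : 0 < s / (2 * κ)),
    four_mul_pi_rpow_neg_three_halves, sqrt_cosh_sub_one hs.le]
  set a := √(1 / 4 + m / κ ^ 2) with ha
  have habs : 2 * |κ * a| * (s / (2 * κ)) = s * a := by
    rw [abs_of_nonneg (by positivity)]
    field_simp
  have hexp : exp (-s * spectralParameter κ m) = exp (-(s * a)) / exp (s / 2) := by
    rw [← exp_sub, spectralParameter, ← ha]
    ring_nf
  have hden : 1 - exp (-s) ≠ 0 := (one_sub_exp_neg_pos hs).ne'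
  rw [habs, hexp]
  field_simp
  rw [sq_sqrt zero_le_two]
  norm_num

theorem integrableOn_diagHeatIntegrand_mul_exp {κ m s : ℝ} (hκ : 0 < κ) (hm : -(κ ^ 2 / 4) ≤ m)
    (hs : 0 < s) : IntegrableOn (fun t => diagHeatIntegrand κ t s * exp (-m * t)) (Ioi 0) := by
  have hden : 0 < 1 - exp (-s) := one_sub_exp_neg_pos hs
  refine .of_integral_ne_zero ?_
  rw [integral_diagHeatIntegrand_mul_exp hκ hm hs]
  positivity

section ExpDifference

variable {κ m n : ℝ} (hκ : 0 < κ) (hm : -(κ ^ 2 / 4) ≤ m) (hn : -(κ ^ 2 / 4) ≤ n)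
include hκ hm hn

theorem integral_diagHeatIntegrand_mul_exp_sub_exp {s : ℝ} (hs : 0 < s) :
    ∫ t in Ioi (0 : ℝ), diagHeatIntegrand κ t s * (exp (-m * t) - exp (-n * t)) =
      1 / (2 * π) * ((exp (-s * spectralParameter κ m) - exp (-s * spectralParameter κ n)) /
        (1 - exp (-s))) := by
  simp only [mul_sub]
  rw [integral_sub (integrableOn_diagHeatIntegrand_mul_exp hκ hm hs)
    (integrableOn_diagHeatIntegrand_mul_exp hκ hn hs),
    integral_diagHeatIntegrand_mul_exp hκ hm hs, integral_diagHeatIntegrand_mul_exp hκ hn hs,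
    ← mul_sub, ← sub_div]

theorem integrable_diagHeatIntegrand_mul_exp_sub_exp :
    Integrable (fun z : ℝ × ℝ => diagHeatIntegrand κ z.1 z.2 * (exp (-m * z.1) - exp (-n * z.1)))
      ((volume.restrict (Ioi 0)).prod (volume.restrict (Ioi 0))) := by
  wlog hmn : m ≤ n generalizing m n
  · refine (this hn hm (le_of_not_ge hmn)).neg.congr (ae_of_all _ fun z => ?_)
    rw [Pi.neg_apply, ← mul_neg, neg_sub]
  refine integrable_prod_of_nonneg_of_integrable_integral ?_ ?_ ?_ ?_
  · have := measurable_diagHeatIntegrand κ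
    exact Measurable.aestronglyMeasurable (by fun_prop)
  · filter_upwards [ae_restrict_mem measurableSet_Ioi] with s (hs : 0 < s)
    filter_upwards [ae_restrict_mem measurableSet_Ioi] with t (ht : 0 < t)
    refine mul_nonneg (diagHeatIntegrand_nonneg hκ.le ht.le hs.le) (sub_nonneg.2 ?_)
    gcongr
  · filter_upwards [ae_restrict_mem measurableSet_Ioi] with s hs
    simp only [mul_sub]
    exact (integrableOn_diagHeatIntegrand_mul_exp hκ hm hs).sub
      (integrableOn_diagHeatIntegrand_mul_exp hκ hn hs)
  · have hdigamma := (integrableOn_exp_sub_exp_div_one_sub_exp (spectralParameter_pos κ m)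
      (spectralParameter_pos κ n)).const_mul (1 / (2 * π))
    refine IntegrableOn.congr_fun hdigamma (fun s hs => ?_) measurableSet_Ioi
    exact (integral_diagHeatIntegrand_mul_exp_sub_exp hκ hm hn hs).symm

end ExpDifference

theorem diag_principal_matrix_H2_general {κ m n : ℝ} (hκ : 0 < κ) (hm : -(κ ^ 2 / 4) ≤ m)
    (hn : -(κ ^ 2 / 4) ≤ n) :
    ∫ t in Ioi (0 : ℝ), diagHeatKernel κ t * (exp (-m * t) - exp (-n * t)) =
      1 / (2 * π) * ∫ t in Ioi (0 : ℝ),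
        (exp (-t * spectralParameter κ m) - exp (-t * spectralParameter κ n)) / (1 - exp (-t)) :=
  calc ∫ t in Ioi (0 : ℝ), diagHeatKernel κ t * (exp (-m * t) - exp (-n * t))
      = ∫ t in Ioi (0 : ℝ), ∫ s in Ioi (0 : ℝ),
          diagHeatIntegrand κ t s * (exp (-m * t) - exp (-n * t)) := by
        simp only [diagHeatKernel_eq_integral, integral_mul_const]
    _ = ∫ s in Ioi (0 : ℝ), ∫ t in Ioi (0 : ℝ),
          diagHeatIntegrand κ t s * (exp (-m * t) - exp (-n * t)) :=
        integral_integral_swap (integrable_diagHeatIntegrand_mul_exp_sub_exp hκ hm hn)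
    _ = ∫ s in Ioi (0 : ℝ), 1 / (2 * π) *
          ((exp (-s * spectralParameter κ m) - exp (-s * spectralParameter κ n)) /
            (1 - exp (-s))) :=
        setIntegral_congr_fun measurableSet_Ioi fun _ hs =>
          integral_diagHeatIntegrand_mul_exp_sub_exp hκ hm hn hs
    _ = _ := integral_const_mul _ _

end HeatKernel

/-- The diagonal entry of the principal matrix on the hyperbolic plane `ℍ²_κ` equals
the difference of digamma values in their integral representation: for `κ, μ, ν > 0`,
`∫₀^∞ K_t(0) (e^{-μ² t} - e^{-ν² t}) dt
  = (1/(2π)) ∫₀^∞ (e^{-t(1/2 + √(1/4 + μ²/κ²))} - e^{-t(1/2 + √(1/4 + ν²/κ²))})/(1 - e^{-t}) dt`,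
where `K_t(0) = (√2/κ)(4π t)^{-3/2} e^{-κ² t/4} ∫₀^∞ s e^{-s²/(4κ² t)}/√(cosh s - 1) ds`
is the diagonal heat kernel of `ℍ²_κ`. -/
theorem diag_principal_matrix_H2 (κ μ ν : ℝ) (hκ : 0 < κ) (hμ : 0 < μ) (hν : 0 < ν) :
    ∫ t in Ioi (0 : ℝ),
        ((Real.sqrt 2 / κ) * (4 * π * t) ^ (-(3 : ℝ) / 2) * Real.exp (-κ ^ 2 * t / 4) *
            ∫ s in Ioi (0 : ℝ),
              s * Real.exp (-s ^ 2 / (4 * κ ^ 2 * t)) / Real.sqrt (Real.cosh s - 1)) *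
          (Real.exp (-μ ^ 2 * t) - Real.exp (-ν ^ 2 * t))
      = (1 / (2 * π)) *
          ∫ t in Ioi (0 : ℝ),
            (Real.exp (-t * (1 / 2 + Real.sqrt (1 / 4 + μ ^ 2 / κ ^ 2))) -
              Real.exp (-t * (1 / 2 + Real.sqrt (1 / 4 + ν ^ 2 / κ ^ 2)))) /
              (1 - Real.exp (-t)) := by
  have hbottom (x : ℝ) : -(κ ^ 2 / 4) ≤ x ^ 2 := by nlinarith [sq_nonneg κ, sq_nonneg x]
  exact diag_principal_matrix_H2_general hκ (hbottom μ) (hbottom ν)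
end

section
/- Let μ₁, μ₂, d > 0. Consider the characteristic equation (ν − μ₁)(ν − μ₂) = e^{−2 d ν}/d² for ν ∈ (0, ∞), which describes the bound states of two point δ-interactions in ℝ³ separated by distance d. If √(μ₁ μ₂) · d > 1, then this equation has exactly two solutions ν > 0; if √(μ₁ μ₂) · d ≤ 1, it has exactly one solution ν > 0. -/
open Real Set

/-!
Write the equation as `(ν - a) * (ν - b) = g ν ^ 2` with `g ν = exp (-d * ν) / d`. As `g` does not
vanish, a root lies below both of `a` and `b` or above both. Above, the left side increases from
`0` while the right side decreases, so there is exactly one root. Below, the equation reads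
`√((a - ν) * (b - ν)) = g ν`; by AM-GM the left side decreases at least at unit speed, while `g`
decreases strictly slower than unit speed on `[0, ∞)`. The difference is therefore strictly
decreasing and negative at `min a b`, so a root exists, and is then unique, exactly when
the difference is positive at `0`, that is, when `g 0 = 1 / d < √(a * b)`.
-/

lemma continuousOn_of_antitoneOn_of_monotoneOn_add_id {g : ℝ → ℝ} {s : Set ℝ}
    (hanti : AntitoneOn g s) (hmono : MonotoneOn (fun x ↦ g x + x) s) : ContinuousOn g s := by
  refine (LipschitzOnWith.of_le_add_mul 1 fun x hx y hy ↦ ?_).continuousOn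
  rw [NNReal.coe_one, one_mul, Real.dist_eq]
  rcases le_total x y with hxy | hyx
  · linarith [hmono hx hy hxy, neg_le_abs (x - y)]
  · linarith [hanti hy hx hyx, abs_nonneg (x - y)]

lemma sqrt_mul_add_le_sqrt_add_mul_add {p q t : ℝ} (hp : 0 ≤ p) (hq : 0 ≤ q) (ht : 0 ≤ t) :
    √(p * q) + t ≤ √((p + t) * (q + t)) := by
  have am_gm : 2 * √(p * q) ≤ p + q := by
    rw [sqrt_mul hp]
    linarith [two_mul_le_add_sq √p √q, sq_sqrt hp, sq_sqrt hq]
  apply le_sqrt_of_sq_le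
  calc (√(p * q) + t) ^ 2 = √(p * q) ^ 2 + 2 * √(p * q) * t + t ^ 2 := by ring
    _ = p * q + 2 * √(p * q) * t + t ^ 2 := by rw [sq_sqrt (mul_nonneg hp hq)]
    _ ≤ p * q + (p + q) * t + t ^ 2 := by gcongr
    _ = (p + t) * (q + t) := by ring

lemma antitoneOn_sqrt_mul_add_id (a b : ℝ) :
    AntitoneOn (fun x ↦ √((a - x) * (b - x)) + x) (Iic (min a b)) := by
  intro x _ y hy hxy
  obtain ⟨hya, hyb⟩ := le_min_iff.1 (mem_Iic.1 hy)
  have h := sqrt_mul_add_le_sqrt_add_mul_add (sub_nonneg.2 hya) (sub_nonneg.2 hyb)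
    (sub_nonneg.2 hxy)
  simp only [sub_add_sub_cancel] at h
  linarith

lemma strictMonoOn_mul_sub (a b : ℝ) :
    StrictMonoOn (fun x ↦ (x - a) * (x - b)) (Ici (max a b)) := by
  intro x hx y _ hxy
  obtain ⟨hax, hbx⟩ := max_le_iff.1 (mem_Ici.1 hx)
  exact mul_lt_mul'' (sub_lt_sub_right hxy a) (sub_lt_sub_right hxy b) (sub_nonneg.2 hax)
    (sub_nonneg.2 hbx)

/-- The positive solutions of the characteristic equation of two point interactions with
parameters `a`, `b` and coupling `g`: the `ν > 0` at which the symmetric matrix with diagonal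
`ν - a`, `ν - b` and off-diagonal entry `-g ν` is singular. -/
def boundStates (g : ℝ → ℝ) (a b : ℝ) : Set ℝ :=
  {ν | 0 < ν ∧ (ν - a) * (ν - b) = g ν ^ 2}

section Coupling

variable {g : ℝ → ℝ} {a b : ℝ}

lemma boundStates_eq_union (hpos : ∀ x, 0 < x → 0 < g x) :
    boundStates g a b =
      boundStates g a b ∩ Iio (min a b) ∪ boundStates g a b ∩ Ioi (max a b) := by
  rw [← inter_union_distrib_left, eq_comm, inter_eq_left]
  rintro ν ⟨hν, heq⟩
  have hprod : 0 < (ν - a) * (ν - b) := heq ▸ pow_pos (hpos ν hν) 2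
  rcases mul_pos_iff.1 hprod with ⟨ha, hb⟩ | ⟨ha, hb⟩
  · exact Or.inr (max_lt (sub_pos.1 ha) (sub_pos.1 hb))
  · exact Or.inl (lt_min (sub_neg.1 ha) (sub_neg.1 hb))

lemma ncard_boundStates_eq_add (hpos : ∀ x, 0 < x → 0 < g x)
    (hlower : (boundStates g a b ∩ Iio (min a b)).Finite)
    (hupper : (boundStates g a b ∩ Ioi (max a b)).Finite) :
    (boundStates g a b).ncard =
      (boundStates g a b ∩ Iio (min a b)).ncard + (boundStates g a b ∩ Ioi (max a b)).ncard := by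
  have hdisj : Disjoint (Iio (min a b)) (Ioi (max a b)) :=
    (Iio_disjoint_Ici min_le_max).mono_right Ioi_subset_Ici_self
  conv_lhs => rw [boundStates_eq_union hpos]
  exact ncard_union_eq (hdisj.mono inter_subset_right inter_subset_right) hlower hupper

lemma strictMonoOn_mul_sub_sub_sq {s : Set ℝ} (hnonneg : ∀ x ∈ s, 0 ≤ g x)
    (hanti : AntitoneOn g s) :
    StrictMonoOn (fun x ↦ (x - a) * (x - b) - g x ^ 2) (s ∩ Ici (max a b)) := by
  rintro x ⟨hxs, hxab⟩ y ⟨hys, hyab⟩ hxy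
  have hg : g y ^ 2 ≤ g x ^ 2 := pow_le_pow_left₀ (hnonneg y hys) (hanti hxs hys hxy.le) 2
  linarith [strictMonoOn_mul_sub a b hxab hyab hxy]

lemma subsingleton_boundStates_inter_Ioi (hnonneg : ∀ x, 0 < x → 0 ≤ g x)
    (hanti : AntitoneOn g (Ioi 0)) : (boundStates g a b ∩ Ioi (max a b)).Subsingleton := by
  rintro x ⟨⟨hx0, hx⟩, hxab⟩ y ⟨⟨hy0, hy⟩, hyab⟩
  refine (strictMonoOn_mul_sub_sub_sq hnonneg hanti).injOn ⟨hx0, Ioi_subset_Ici_self hxab⟩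
    ⟨hy0, Ioi_subset_Ici_self hyab⟩ ?_
  exact (sub_eq_zero.2 hx).trans (sub_eq_zero.2 hy).symm

lemma nonempty_boundStates_inter_Ioi (hab : 0 < max a b) (hpos : ∀ x, 0 < x → 0 < g x)
    (hanti : AntitoneOn g (Ioi 0)) (hcont : ContinuousOn g (Ioi 0)) :
    (boundStates g a b ∩ Ioi (max a b)).Nonempty := by
  set m := max a b
  set f : ℝ → ℝ := fun x ↦ (x - a) * (x - b) - g x ^ 2
  have hgm : 0 < g m := hpos m hab
  have hm : m ≤ m + g m := le_add_of_nonneg_right hgm.le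
  have hf : ContinuousOn f (Icc m (m + g m)) := by
    have := hcont.mono fun x (hx : x ∈ Icc m (m + g m)) ↦ hab.trans_le hx.1
    fun_prop
  have hneg : f m < 0 := by
    have hprod : (m - a) * (m - b) = 0 := by
      rcases max_choice a b with h | h <;> simp [m, h]
    simpa only [f, hprod, zero_sub, neg_lt_zero] using pow_pos hgm 2
  have hnonneg : 0 ≤ f (m + g m) := by
    have hm0 : 0 < m + g m := add_pos hab hgm
    have hg : g (m + g m) ≤ g m := hanti hab hm0 hm
    have hg0 : 0 < g (m + g m) := hpos _ hm0
    refine sub_nonneg.2 ?_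
    calc g (m + g m) ^ 2 ≤ g m * g m := by rw [← sq]; gcongr
      _ ≤ (m + g m - a) * (m + g m - b) := by
        gcongr
        · linarith [le_max_left a b]
        · linarith [le_max_left a b]
        · linarith [le_max_right a b]
  obtain ⟨ν, hν, hfν⟩ := intermediate_value_Ioc hm hf ⟨hneg, hnonneg⟩
  exact ⟨ν, ⟨hab.trans hν.1, sub_eq_zero.1 hfν⟩, hν.1⟩

lemma mem_boundStates_iff_sqrt_eq {ν : ℝ} (hν : 0 < ν) (hg : 0 < g ν) :
    ν ∈ boundStates g a b ↔ √((a - ν) * (b - ν)) = g ν := by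
  have hflip : (a - ν) * (b - ν) = (ν - a) * (ν - b) := by ring
  rw [hflip, sqrt_eq_iff_mul_self_eq_of_pos hg, ← sq, eq_comm]
  exact and_iff_right hν

lemma strictAntiOn_sqrt_mul_sub {s : Set ℝ} (hmono : StrictMonoOn (fun x ↦ g x + x) s) :
    StrictAntiOn (fun x ↦ √((a - x) * (b - x)) - g x) (s ∩ Iic (min a b)) := by
  rintro x ⟨hxs, hxab⟩ y ⟨hys, hyab⟩ hxy
  have hsqrt := antitoneOn_sqrt_mul_add_id a b hxab hyab hxy.le
  have hg := hmono hxs hys hxy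
  simp only at hsqrt hg ⊢
  linarith

lemma subsingleton_boundStates_inter_Iio (hpos : ∀ x, 0 < x → 0 < g x)
    (hmono : StrictMonoOn (fun x ↦ g x + x) (Ioi 0)) :
    (boundStates g a b ∩ Iio (min a b)).Subsingleton := by
  rintro x ⟨hx, hxab⟩ y ⟨hy, hyab⟩
  have hfx := (mem_boundStates_iff_sqrt_eq hx.1 (hpos x hx.1)).1 hx
  have hfy := (mem_boundStates_iff_sqrt_eq hy.1 (hpos y hy.1)).1 hy
  exact (strictAntiOn_sqrt_mul_sub hmono).injOn ⟨hx.1, Iio_subset_Iic_self hxab⟩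
    ⟨hy.1, Iio_subset_Iic_self hyab⟩ ((sub_eq_zero.2 hfx).trans (sub_eq_zero.2 hfy).symm)

lemma nonempty_boundStates_inter_Iio_iff (hab : 0 < min a b) (hpos : ∀ x, 0 < x → 0 < g x)
    (hcont : ContinuousOn g (Ici 0)) (hmono : StrictMonoOn (fun x ↦ g x + x) (Ici 0)) :
    (boundStates g a b ∩ Iio (min a b)).Nonempty ↔ g 0 < √(a * b) := by
  set f : ℝ → ℝ := fun x ↦ √((a - x) * (b - x)) - g x
  have hf0 : f 0 = √(a * b) - g 0 := by simp only [f, sub_zero]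
  rw [← sub_pos, ← hf0]
  constructor
  · rintro ⟨ν, hν, hνab⟩
    have hfν : f ν = 0 := sub_eq_zero.2 ((mem_boundStates_iff_sqrt_eq hν.1 (hpos ν hν.1)).1 hν)
    exact hfν ▸ strictAntiOn_sqrt_mul_sub hmono ⟨self_mem_Ici, hab.le⟩
      ⟨hν.1.le, Iio_subset_Iic_self hνab⟩ hν.1
  · intro h0
    have hf : ContinuousOn f (Icc 0 (min a b)) := by
      have := hcont.mono fun x (hx : x ∈ Icc 0 (min a b)) ↦ hx.1
      fun_prop
    have hneg : f (min a b) < 0 := by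
      have hprod : (a - min a b) * (b - min a b) = 0 := by
        rcases min_choice a b with h | h <;> simp [h]
      simpa only [f, hprod, sqrt_zero, zero_sub, neg_lt_zero] using hpos _ hab
    obtain ⟨ν, hν, hfν⟩ := intermediate_value_Ioo' hab.le hf ⟨hneg, h0⟩
    exact ⟨ν, (mem_boundStates_iff_sqrt_eq hν.1 (hpos ν hν.1)).2 (sub_eq_zero.1 hfν), hν.2⟩

theorem two_delta_bound_states_R3_general (ha : 0 < a) (hb : 0 < b)
    (hpos : ∀ x, 0 < x → 0 < g x) (hanti : AntitoneOn g (Ici 0))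
    (hmono : StrictMonoOn (fun x ↦ g x + x) (Ici 0)) :
    (g 0 < √(a * b) → (boundStates g a b).ncard = 2) ∧
    (√(a * b) ≤ g 0 → (boundStates g a b).ncard = 1) := by
  have hcont := continuousOn_of_antitoneOn_of_monotoneOn_add_id hanti hmono.monotoneOn
  have hlower := subsingleton_boundStates_inter_Iio (a := a) (b := b) hpos
    (hmono.mono Ioi_subset_Ici_self)
  have hupper := subsingleton_boundStates_inter_Ioi (a := a) (b := b) (fun x hx ↦ (hpos x hx).le)
    (hanti.mono Ioi_subset_Ici_self)
  have hlower_iff := nonempty_boundStates_inter_Iio_iff (lt_min ha hb) hpos hcont hmono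
  have hcard_upper : (boundStates g a b ∩ Ioi (max a b)).ncard = 1 :=
    ncard_eq_one.2 <| exists_eq_singleton_iff_nonempty_subsingleton.2
      ⟨nonempty_boundStates_inter_Ioi (lt_max_of_lt_left ha) hpos
        (hanti.mono Ioi_subset_Ici_self) (hcont.mono Ioi_subset_Ici_self), hupper⟩
  rw [ncard_boundStates_eq_add hpos hlower.finite hupper.finite, hcard_upper]
  refine ⟨fun h ↦ ?_, fun h ↦ ?_⟩
  · rw [ncard_eq_one.2 <| exists_eq_singleton_iff_nonempty_subsingleton.2
      ⟨hlower_iff.2 h, hlower⟩]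
  · rw [not_nonempty_iff_eq_empty.1 (mt hlower_iff.1 h.not_gt), ncard_empty]

end Coupling

/-- The coupling `exp (-d * ν) / d` of two point interactions in `ℝ³` at distance `d`, seen as a
function of `ν`; it is `-4π` times the off-diagonal entry of the principal matrix. -/
noncomputable def yukawa (d ν : ℝ) : ℝ :=
  exp (-d * ν) / d

lemma boundStates_yukawa (d a b : ℝ) :
    boundStates (yukawa d) a b =
      {ν | 0 < ν ∧ (ν - a) * (ν - b) = exp (-2 * d * ν) / d ^ 2} := by
  have hsq (ν : ℝ) : yukawa d ν ^ 2 = exp (-2 * d * ν) / d ^ 2 := by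
    rw [yukawa, div_pow, ← exp_nat_mul]
    ring_nf
  simp only [boundStates, hsq]

section Yukawa

variable {d : ℝ}

lemma yukawa_zero_lt_iff (hd : 0 < d) {c : ℝ} : yukawa d 0 < c ↔ 1 < c * d := by
  rw [yukawa, mul_zero, exp_zero, div_lt_iff₀ hd]

lemma yukawa_pos (hd : 0 < d) (ν : ℝ) : 0 < yukawa d ν :=
  div_pos (exp_pos _) hd

lemma antitone_yukawa (hd : 0 < d) : Antitone (yukawa d) := by
  intro x y hxy
  have : -d * y ≤ -d * x := mul_le_mul_of_nonpos_left hxy (neg_nonpos.2 hd.le)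
  unfold yukawa
  gcongr

lemma hasDerivAt_yukawa (hd : d ≠ 0) (ν : ℝ) : HasDerivAt (yukawa d) (-exp (-d * ν)) ν := by
  refine ((((hasDerivAt_id ν).const_mul (-d)).exp).div_const d).congr_deriv ?_
  simp only [id]
  field_simp

lemma strictMonoOn_yukawa_add_id (hd : 0 < d) :
    StrictMonoOn (fun ν ↦ yukawa d ν + ν) (Ici 0) := by
  have hderiv (ν : ℝ) : HasDerivAt (fun ν ↦ yukawa d ν + ν) (-exp (-d * ν) + 1) ν :=
    (hasDerivAt_yukawa hd.ne' ν).add (hasDerivAt_id ν)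
  refine strictMonoOn_of_deriv_pos (convex_Ici 0)
    (fun ν _ ↦ (hderiv ν).continuousAt.continuousWithinAt) fun ν hν ↦ ?_
  rw [interior_Ici, mem_Ioi] at hν
  have hexp : exp (-d * ν) < 1 := exp_lt_one_iff.2 <| mul_neg_of_neg_of_pos (neg_neg_of_pos hd) hν
  rw [(hderiv ν).deriv]
  linarith

end Yukawa

/-- Number of bound states of two point δ-interactions in ℝ³: for `μ₁, μ₂, d > 0`,
the characteristic equation `(ν - μ₁)(ν - μ₂) = e^{-2dν}/d²` on `(0, ∞)` has exactly
two solutions if `√(μ₁ μ₂) d > 1`, and exactly one solution if `√(μ₁ μ₂) d ≤ 1`. -/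
theorem two_delta_bound_states_R3 (μ₁ μ₂ d : ℝ) (hμ₁ : 0 < μ₁) (hμ₂ : 0 < μ₂) (hd : 0 < d) :
    (Real.sqrt (μ₁ * μ₂) * d > 1 →
      {ν : ℝ | 0 < ν ∧ (ν - μ₁) * (ν - μ₂) = Real.exp (-2 * d * ν) / d ^ 2}.ncard = 2) ∧
    (Real.sqrt (μ₁ * μ₂) * d ≤ 1 →
      {ν : ℝ | 0 < ν ∧ (ν - μ₁) * (ν - μ₂) = Real.exp (-2 * d * ν) / d ^ 2}.ncard = 1) := by
  simpa only [boundStates_yukawa, ← not_lt, yukawa_zero_lt_iff hd] using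
    two_delta_bound_states_R3_general hμ₁ hμ₂ (fun ν _ ↦ yukawa_pos hd ν)
      ((antitone_yukawa hd).antitoneOn _) (strictMonoOn_yukawa_add_id hd)
end

section
/- Let λ₁, λ₂, d > 0. Consider the characteristic equation (1/λ₁ − 1/(2ν)) (1/λ₂ − 1/(2ν)) = e^{−2 d ν}/(4 ν²) for ν ∈ (0, ∞), which describes the bound states of two point δ-interactions in ℝ¹ of strengths λ₁, λ₂ separated by distance d. If d > 1/λ₁ + 1/λ₂, this equation has exactly two solutions ν > 0; otherwise it has exactly one solution ν > 0. -/
open Real Set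

/-!
With `α = λ₁/2`, `β = λ₂/2` and `D = 2d`, clearing denominators turns the characteristic equation
into `(ν - α)(ν - β) = αβ e^{-Dν}`. The right-hand side is positive, so a solution lies above both
`α` and `β` or below both. Above them the difference of the two sides is strictly increasing and
changes sign, which gives exactly one solution. Below them the logarithm of the equation asks the
strictly concave function `log (α - ν) + log (β - ν) + Dν` to return to its value at `ν = 0`, which
it does at most once. It does so exactly when its slope at `0`, which is `D - 1/α - 1/β`, is
positive.
-/

lemma eq_of_strictConcaveOn_of_map_eq {𝕜 β : Type*} [Field 𝕜] [LinearOrder 𝕜]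
    [IsStrictOrderedRing 𝕜] [AddCommMonoid β] [LinearOrder β] [IsOrderedAddMonoid β]
    [Module 𝕜 β] [PosSMulStrictMono 𝕜 β] {s : Set 𝕜} {f : 𝕜 → β} {a x y : 𝕜}
    (hf : StrictConcaveOn 𝕜 s f) (ha : a ∈ s) (hx : x ∈ s) (hy : y ∈ s) (hax : a < x)
    (hay : a < y) (hfx : f x = f a) (hfy : f y = f a) : x = y := by
  wlog hxy : x < y generalizing x y
  · rcases (not_lt.1 hxy).lt_or_eq with hlt | heq
    · exact (this hy hx hay hax hfy hfx hlt).symm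
    · exact heq.symm
  have hmem : x ∈ openSegment 𝕜 a y := by
    rw [openSegment_eq_Ioo hay]
    exact ⟨hax, hxy⟩
  have hlt : min (f a) (f y) < f x := hf.lt_on_openSegment ha hy hay.ne hmem
  simp only [hfx, hfy, min_self, lt_self_iff_false] at hlt

lemma strictConcaveOn_log_const_sub (α : ℝ) :
    StrictConcaveOn ℝ (Iio α) fun x ↦ log (α - x) := by
  refine ⟨convex_Iio α, fun x hx y hy hxy a b ha hb hab ↦ ?_⟩
  have hlog := strictConcaveOn_log_Ioi.2 (mem_Ioi.2 (sub_pos.2 hx)) (mem_Ioi.2 (sub_pos.2 hy))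
    (sub_right_injective.ne hxy) ha hb hab
  have hcomb : a • (α - x) + b • (α - y) = α - (a • x + b • y) := by
    simp only [smul_eq_mul]
    linear_combination α * hab
  rwa [hcomb] at hlog

/-- The secular function of two attractive point interactions on the line: its positive zeros are
the `ν` for which `-ν ^ 2` is a bound state energy. The interactions have strengths `2 * α` and
`2 * β` and distance `D / 2`; the function is the determinant of the principal matrix at energy
`-ν ^ 2` multiplied by `4 * α * β * ν ^ 2`, with `ν = x`. -/
noncomputable def secular (α β D x : ℝ) : ℝ := (x - α) * (x - β) - α * β * exp (-(D * x))

section Secular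

variable {α β D x y : ℝ}

lemma continuous_secular (α β D : ℝ) : Continuous (secular α β D) := by
  unfold secular
  fun_prop

lemma secular_zero (α β D : ℝ) : secular α β D 0 = 0 := by
  simp [secular]

lemma hasDerivAt_secular_zero (α β D : ℝ) :
    HasDerivAt (secular α β D) (α * β * D - (α + β)) 0 := by
  have hprod : HasDerivAt (fun x : ℝ ↦ (x - α) * (x - β)) (1 * (0 - β) + (0 - α) * 1) 0 :=
    ((hasDerivAt_id 0).sub_const α).mul ((hasDerivAt_id 0).sub_const β)
  have hexp : HasDerivAt (fun x : ℝ ↦ exp (-(D * x))) (exp (-(D * 0)) * -(D * 1)) 0 :=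
    ((hasDerivAt_id 0).const_mul D).neg.exp
  refine (hprod.sub (hexp.const_mul (α * β))).congr_deriv ?_
  simp only [mul_zero, neg_zero, exp_zero]
  ring

lemma secular_neg_of_mem_uIcc (hαβ : 0 < α * β) (hx : x ∈ uIcc α β) : secular α β D x < 0 := by
  have hprod : (x - α) * (x - β) ≤ 0 := by
    rcases mem_uIcc.1 hx with ⟨hα, hβ⟩ | ⟨hβ, hα⟩
    · exact mul_nonpos_of_nonneg_of_nonpos (sub_nonneg.2 hα) (sub_nonpos.2 hβ)
    · exact mul_nonpos_of_nonpos_of_nonneg (sub_nonpos.2 hα) (sub_nonneg.2 hβ)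
  have hexp : 0 < α * β * exp (-(D * x)) := mul_pos hαβ (exp_pos _)
  exact sub_neg.2 (hprod.trans_lt hexp)

lemma lt_min_or_max_lt_of_secular_eq_zero (hαβ : 0 < α * β) (hx : secular α β D x = 0) :
    x < min α β ∨ max α β < x := by
  by_contra! h
  exact (secular_neg_of_mem_uIcc hαβ h).ne hx

lemma strictMonoOn_secular (hαβ : 0 ≤ α * β) (hD : 0 ≤ D) :
    StrictMonoOn (secular α β D) (Ici (max α β)) := by
  intro x hx y _ hxy
  obtain ⟨hα, hβ⟩ := max_le_iff.1 (mem_Ici.1 hx)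
  have hprod : (x - α) * (x - β) < (y - α) * (y - β) :=
    mul_lt_mul'' (by linarith) (by linarith) (sub_nonneg.2 hα) (sub_nonneg.2 hβ)
  have hexp : α * β * exp (-(D * y)) ≤ α * β * exp (-(D * x)) := by gcongr
  exact (sub_lt_sub_right hprod _).trans_le (sub_le_sub_left hexp _)

lemma secular_add_nonneg (hα : 0 ≤ α) (hβ : 0 ≤ β) (hD : 0 ≤ D) :
    0 ≤ secular α β D (α + β) := by
  have hexp : exp (-(D * (α + β))) ≤ 1 := exp_le_one_iff.2 (neg_nonpos.2 (by positivity))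
  have hsecular : secular α β D (α + β) = α * β * (1 - exp (-(D * (α + β)))) := by
    unfold secular
    ring
  rw [hsecular]
  exact mul_nonneg (mul_nonneg hα hβ) (sub_nonneg.2 hexp)

lemma existsUnique_max_lt_secular_eq_zero (hα : 0 < α) (hβ : 0 < β) (hD : 0 ≤ D) :
    ∃! x, max α β < x ∧ secular α β D x = 0 := by
  have hαβ : 0 < α * β := mul_pos hα hβ
  have hneg : secular α β D (max α β) < 0 := secular_neg_of_mem_uIcc hαβ ⟨inf_le_sup, le_rfl⟩
  have hle : max α β ≤ α + β := max_le_add_of_nonneg hα.le hβ.le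
  obtain ⟨x, hx, hx0⟩ := intermediate_value_Ioc hle (continuous_secular α β D).continuousOn
    ⟨hneg, secular_add_nonneg hα.le hβ.le hD⟩
  refine ⟨x, ⟨hx.1, hx0⟩, fun y hy ↦ ?_⟩
  exact (strictMonoOn_secular hαβ.le hD).injOn hy.1.le hx.1.le (hy.2.trans hx0.symm)

/-- The logarithmic form of the secular function: for `α, β > 0`, on the interval
`x < min α β`, the zeros of `secular` are the points where this function takes its value at `0`. -/
noncomputable def logSecular (α β D x : ℝ) : ℝ := log (α - x) + log (β - x) + D * x

lemma strictConcaveOn_logSecular (α β D : ℝ) :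
    StrictConcaveOn ℝ (Iio (min α β)) (logSecular α β D) := by
  have hconv : Convex ℝ (Iio (min α β)) := convex_Iio _
  have hα := (strictConcaveOn_log_const_sub α).subset (Iio_subset_Iio (min_le_left α β)) hconv
  have hβ := (strictConcaveOn_log_const_sub β).subset (Iio_subset_Iio (min_le_right α β)) hconv
  have hlinear : ConcaveOn ℝ (Iio (min α β)) fun x ↦ D * x :=
    (LinearMap.mulLeft ℝ D).concaveOn hconv
  exact (hα.add hβ).add_concaveOn hlinear

lemma logSecular_eq_of_secular_eq_zero (hα : 0 < α) (hβ : 0 < β) (hx : x < min α β)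
    (h : secular α β D x = 0) : logSecular α β D x = logSecular α β D 0 := by
  obtain ⟨hxα, hxβ⟩ := lt_min_iff.1 hx
  have hprod : (α - x) * (β - x) = α * β * exp (-(D * x)) := by
    unfold secular at h
    linear_combination h
  have hlog : log (α - x) + log (β - x) = log α + log β - D * x := by
    rw [← log_mul (sub_pos.2 hxα).ne' (sub_pos.2 hxβ).ne', hprod,
      log_mul (mul_pos hα hβ).ne' (exp_ne_zero _), log_mul hα.ne' hβ.ne', log_exp, sub_eq_add_neg]
  simp only [logSecular, hlog, sub_zero, mul_zero, sub_add_cancel, add_zero]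

lemma eq_of_secular_eq_zero_of_mem_Ioo (hx : x ∈ Ioo 0 (min α β)) (hy : y ∈ Ioo 0 (min α β))
    (hx0 : secular α β D x = 0) (hy0 : secular α β D y = 0) : x = y := by
  have hmin : 0 < min α β := hx.1.trans hx.2
  obtain ⟨hα, hβ⟩ := lt_min_iff.1 hmin
  exact eq_of_strictConcaveOn_of_map_eq (strictConcaveOn_logSecular α β D) hmin hx.2 hy.2
    hx.1 hy.1 (logSecular_eq_of_secular_eq_zero hα hβ hx.2 hx0)
    (logSecular_eq_of_secular_eq_zero hα hβ hy.2 hy0)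

lemma existsUnique_mem_Ioo_secular_eq_zero (hα : 0 < α) (hβ : 0 < β) (hD : α⁻¹ + β⁻¹ < D) :
    ∃! x, x ∈ Ioo 0 (min α β) ∧ secular α β D x = 0 := by
  have hαβ : 0 < α * β := mul_pos hα hβ
  have hderiv : 0 < deriv (secular α β D) 0 := by
    have hsum : α * β * (α⁻¹ + β⁻¹) = α + β := by field_simp; ring
    rw [(hasDerivAt_secular_zero α β D).deriv, sub_pos, ← hsum]
    exact mul_lt_mul_of_pos_left hD hαβ
  have hsign := eventually_nhdsWithin_sign_eq_of_deriv_pos hderiv (secular_zero α β D)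
  obtain ⟨a, hsign_a, ha⟩ : ∃ a, SignType.sign (secular α β D a) = SignType.sign (a - 0) ∧
      a ∈ Ioo 0 (min α β) :=
    ((hsign.filter_mono nhdsWithin_le_nhds).and (Ioo_mem_nhdsGT (lt_min hα hβ))).exists
  have hpos : 0 < secular α β D a := by
    rwa [sub_zero, sign_pos ha.1, sign_eq_one_iff] at hsign_a
  have hneg : secular α β D (min α β) < 0 := secular_neg_of_mem_uIcc hαβ ⟨le_rfl, inf_le_sup⟩
  obtain ⟨x, hx, hx0⟩ := intermediate_value_Ioo' ha.2.le
    (continuous_secular α β D).continuousOn ⟨hneg, hpos⟩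
  have hxmem : x ∈ Ioo 0 (min α β) := ⟨ha.1.trans hx.1, hx.2⟩
  exact ⟨x, ⟨hxmem, hx0⟩, fun y hy ↦ eq_of_secular_eq_zero_of_mem_Ioo hy.1 hxmem hy.2 hx0⟩

lemma const_sub_lt_mul_exp_neg_div (hα : 0 < α) (hx : x ≠ 0) : α - x < α * exp (-(x / α)) := by
  have hexp : 1 - x / α < exp (-(x / α)) := one_sub_lt_exp_neg (div_ne_zero hx hα.ne')
  calc α - x = α * (1 - x / α) := by field_simp
    _ < α * exp (-(x / α)) := mul_lt_mul_of_pos_left hexp hα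

lemma secular_neg_of_mem_Ioo (hD : D ≤ α⁻¹ + β⁻¹) (hx : x ∈ Ioo 0 (min α β)) :
    secular α β D x < 0 := by
  obtain ⟨hxα, hxβ⟩ := lt_min_iff.1 hx.2
  have hα : 0 < α := hx.1.trans hxα
  have hβ : 0 < β := hx.1.trans hxβ
  refine sub_neg.2 ?_
  calc (x - α) * (x - β) = (α - x) * (β - x) := by ring
    _ < (α * exp (-(x / α))) * (β * exp (-(x / β))) :=
      mul_lt_mul'' (const_sub_lt_mul_exp_neg_div hα hx.1.ne')
        (const_sub_lt_mul_exp_neg_div hβ hx.1.ne') (sub_pos.2 hxα).le (sub_pos.2 hxβ).le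
    _ = α * β * exp (-((α⁻¹ + β⁻¹) * x)) := by
      rw [mul_mul_mul_comm, ← exp_add]
      ring_nf
    _ ≤ α * β * exp (-(D * x)) := by
      gcongr
      exact hx.1.le

lemma ncard_secular_eq_zero_eq_two (hα : 0 < α) (hβ : 0 < β) (hD : α⁻¹ + β⁻¹ < D) :
    {x | 0 < x ∧ secular α β D x = 0}.ncard = 2 := by
  have hD0 : 0 ≤ D := by linarith [inv_pos.2 hα, inv_pos.2 hβ]
  obtain ⟨m, ⟨hm, hm0⟩, hm_unique⟩ := existsUnique_mem_Ioo_secular_eq_zero hα hβ hD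
  obtain ⟨M, ⟨hM, hM0⟩, hM_unique⟩ := existsUnique_max_lt_secular_eq_zero hα hβ hD0
  have hmM : m < M := hm.2.trans_le (min_le_max.trans hM.le)
  refine ncard_eq_two.2 ⟨m, M, hmM.ne, Subset.antisymm ?_ ?_⟩
  · rintro x ⟨hx, hx0⟩
    exact (lt_min_or_max_lt_of_secular_eq_zero (mul_pos hα hβ) hx0).imp
      (fun hlt ↦ hm_unique x ⟨⟨hx, hlt⟩, hx0⟩) (fun hlt ↦ hM_unique x ⟨hlt, hx0⟩)
  · rintro x (rfl | rfl)
    · exact ⟨hm.1, hm0⟩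
    · exact ⟨hm.1.trans hmM, hM0⟩

lemma ncard_secular_eq_zero_eq_one (hα : 0 < α) (hβ : 0 < β) (hD0 : 0 ≤ D)
    (hD : D ≤ α⁻¹ + β⁻¹) : {x | 0 < x ∧ secular α β D x = 0}.ncard = 1 := by
  obtain ⟨M, ⟨hM, hM0⟩, hM_unique⟩ := existsUnique_max_lt_secular_eq_zero hα hβ hD0
  refine ncard_eq_one.2 ⟨M, Subset.antisymm ?_ ?_⟩
  · rintro x ⟨hx, hx0⟩
    rcases lt_min_or_max_lt_of_secular_eq_zero (mul_pos hα hβ) hx0 with hlt | hlt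
    · exact absurd hx0 (secular_neg_of_mem_Ioo hD ⟨hx, hlt⟩).ne
    · exact hM_unique x ⟨hlt, hx0⟩
  · rintro x rfl
    exact ⟨(lt_max_of_lt_left hα).trans hM, hM0⟩

end Secular

lemma characteristic_eq_iff_secular_eq_zero {lam₁ lam₂ ν : ℝ} (d : ℝ) (hl1 : lam₁ ≠ 0)
    (hl2 : lam₂ ≠ 0) (hν : ν ≠ 0) :
    (1 / lam₁ - 1 / (2 * ν)) * (1 / lam₂ - 1 / (2 * ν)) = exp (-2 * d * ν) / (4 * ν ^ 2) ↔
      secular (lam₁ / 2) (lam₂ / 2) (2 * d) ν = 0 := by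
  have hexp : -2 * d * ν = -(2 * d * ν) := by ring
  have hscale : secular (lam₁ / 2) (lam₂ / 2) (2 * d) ν = lam₁ * lam₂ * ν ^ 2 *
      ((1 / lam₁ - 1 / (2 * ν)) * (1 / lam₂ - 1 / (2 * ν)) -
        exp (-2 * d * ν) / (4 * ν ^ 2)) := by
    rw [secular, hexp]
    field_simp
    ring
  have hne : lam₁ * lam₂ * ν ^ 2 ≠ 0 := mul_ne_zero (mul_ne_zero hl1 hl2) (pow_ne_zero 2 hν)
  rw [hscale, mul_eq_zero_iff_left hne, sub_eq_zero]

/-- Number of bound states of two point δ-interactions in ℝ¹ with strengths `λ₁, λ₂ > 0`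
at distance `d > 0`: the characteristic equation
`(1/λ₁ - 1/(2ν))(1/λ₂ - 1/(2ν)) = e^{-2dν}/(4ν²)` on `(0, ∞)` has exactly two solutions
if `d > 1/λ₁ + 1/λ₂`, and exactly one solution otherwise. -/
theorem two_delta_bound_states_R1 (lam₁ lam₂ d : ℝ) (hl1 : 0 < lam₁) (hl2 : 0 < lam₂)
    (hd : 0 < d) :
    (d > 1 / lam₁ + 1 / lam₂ →
      {ν : ℝ | 0 < ν ∧ (1 / lam₁ - 1 / (2 * ν)) * (1 / lam₂ - 1 / (2 * ν)) =
        Real.exp (-2 * d * ν) / (4 * ν ^ 2)}.ncard = 2) ∧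
    (d ≤ 1 / lam₁ + 1 / lam₂ →
      {ν : ℝ | 0 < ν ∧ (1 / lam₁ - 1 / (2 * ν)) * (1 / lam₂ - 1 / (2 * ν)) =
        Real.exp (-2 * d * ν) / (4 * ν ^ 2)}.ncard = 1) := by
  have hsolutions : {ν : ℝ | 0 < ν ∧ (1 / lam₁ - 1 / (2 * ν)) * (1 / lam₂ - 1 / (2 * ν)) =
      exp (-2 * d * ν) / (4 * ν ^ 2)} =
      {ν | 0 < ν ∧ secular (lam₁ / 2) (lam₂ / 2) (2 * d) ν = 0} :=
    ext fun _ ↦ and_congr_right fun hν ↦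
      characteristic_eq_iff_secular_eq_zero d hl1.ne' hl2.ne' hν.ne'
  have hthreshold : (lam₁ / 2)⁻¹ + (lam₂ / 2)⁻¹ = 2 * (1 / lam₁ + 1 / lam₂) := by ring
  rw [hsolutions]
  refine ⟨fun h ↦ ncard_secular_eq_zero_eq_two (half_pos hl1) (half_pos hl2) ?_,
    fun h ↦ ncard_secular_eq_zero_eq_one (half_pos hl1) (half_pos hl2) (by positivity) ?_⟩
  · linarith
  · linarith
end

section
/- Let κ > 0, let N ≥ 1 be an integer, let μ₁, …, μ_N ≥ μ > 0, let d_{ij} = d_{ji} ≥ d > 0 for i ≠ j, and let ν > 0. Let Φ(−ν²) be the explicit principal matrix on ℍ³_κ. If √(κ² + ν²) − √(κ² + μ²) + (N−1) κ e^{−d √(κ² + ν²)} / sinh(κ d) < 0, then for every index i one has Φ_{ii}(−ν²) + Σ_{j ≠ i} |Φ_{ij}(−ν²)| < 0, and consequently the matrix Φ(−ν²) is negative definite. -/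
open Real Set Matrix Finset

/-!
By Gershgorin's theorem a Hermitian matrix is positive definite as soon as its diagonal strictly
dominates each row. The resolvent kernel of `ℍ³_κ` decreases with the distance, so every
off-diagonal entry of the principal matrix is at most the kernel at the minimal distance `d`, and
the assumed inequality, divided by `4π`, is exactly the resulting bound on the row sums. Transposing
the distances transposes the matrix, so the same bound controls the columns and the Hermitian part
of `-Φ` is diagonally dominant.
-/

section DiagonallyDominant

open scoped ComplexOrder

variable {𝕜 n : Type*} [RCLike 𝕜] [Fintype n] [DecidableEq n] {A : Matrix n n 𝕜}

theorem posDef_of_sum_row_lt_re_diag (hA : A.IsHermitian)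
    (h : ∀ i, ∑ j ∈ univ.erase i, ‖A i j‖ < RCLike.re (A i i)) : A.PosDef := by
  refine hA.posDef_iff_eigenvalues_pos.mpr fun i ↦ ?_
  have hev : Module.End.HasEigenvalue (Matrix.toLin' A) (hA.eigenvalues i : 𝕜) := by
    rw [Module.End.hasEigenvalue_iff_mem_spectrum, spectrum_toLin']
    exact hA.spectrum_eq_image_range ▸ ⟨_, ⟨i, rfl⟩, rfl⟩
  obtain ⟨k, hk⟩ := eigenvalue_mem_ball hev
  have hdist : RCLike.re (A k k) - hA.eigenvalues i ≤ ∑ j ∈ univ.erase k, ‖A k j‖ :=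
    calc RCLike.re (A k k) - hA.eigenvalues i
        = RCLike.re (A k k - (hA.eigenvalues i : 𝕜)) := by rw [map_sub, RCLike.ofReal_re]
      _ ≤ ‖A k k - (hA.eigenvalues i : 𝕜)‖ := RCLike.re_le_norm _
      _ ≤ _ := mem_closedBall_iff_norm'.mp hk
  linarith [h k]

theorem re_dotProduct_mulVec_pos_of_sum_row_add_col_lt_re_diag
    (h : ∀ i, ∑ j ∈ univ.erase i, (‖A i j‖ + ‖A j i‖) / 2 < RCLike.re (A i i))
    {x : n → 𝕜} (hx : x ≠ 0) : 0 < RCLike.re (star x ⬝ᵥ A *ᵥ x) := by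
  have hdom (i : n) : ∑ j ∈ univ.erase i, ‖(A + Aᴴ) i j‖ < RCLike.re ((A + Aᴴ) i i) :=
    calc ∑ j ∈ univ.erase i, ‖(A + Aᴴ) i j‖
        ≤ ∑ j ∈ univ.erase i, (‖A i j‖ + ‖A j i‖) := by
          gcongr with j
          exact (norm_add_le (A i j) (star (A j i))).trans_eq (by rw [norm_star])
      _ < 2 * RCLike.re (A i i) := by
          have := h i
          rw [← Finset.sum_div] at this
          linarith
      _ = RCLike.re ((A + Aᴴ) i i) := by simp [two_mul]
  have hposDef : (A + Aᴴ).PosDef :=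
    posDef_of_sum_row_lt_re_diag (isHermitian_add_transpose_self A) hdom
  have hadj : star x ⬝ᵥ Aᴴ *ᵥ x = star (star x ⬝ᵥ A *ᵥ x) := by
    rw [star_dotProduct, star_mulVec, conjTranspose_conjTranspose, ← dotProduct_mulVec]
  have hpos : 0 < RCLike.re (star x ⬝ᵥ (A + Aᴴ) *ᵥ x) :=
    (RCLike.pos_iff.mp (hposDef.dotProduct_mulVec_pos hx)).1
  rw [add_mulVec, dotProduct_add, hadj, map_add, RCLike.star_def, RCLike.conj_re] at hpos
  linarith

end DiagonallyDominant

/-- The kernel, at distance `r`, of the resolvent `(-Δ + ν²)⁻¹` of the Laplacian on hyperbolic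
3-space of curvature `-κ²`. It is meaningful for `κ ≠ 0` and `r > 0`; at `r = 0`, where the kernel
is singular, division by zero gives `0`. -/
noncomputable def resolventKernelH3 (κ ν r : ℝ) : ℝ :=
  κ * exp (-r * √(κ ^ 2 + ν ^ 2)) / (4 * π * sinh (κ * r))

section ResolventKernel

variable {κ ν : ℝ}

theorem resolventKernelH3_nonneg (hκ : 0 ≤ κ) {r : ℝ} (hr : 0 ≤ r) :
    0 ≤ resolventKernelH3 κ ν r := by
  have : 0 ≤ sinh (κ * r) := sinh_nonneg_iff.mpr (by positivity)
  unfold resolventKernelH3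
  positivity

theorem antitoneOn_resolventKernelH3 (hκ : 0 < κ) :
    AntitoneOn (resolventKernelH3 κ ν) (Ioi 0) := by
  intro r (hr : 0 < r) s _ hrs
  have : 0 < sinh (κ * r) := sinh_pos_iff.mpr (by positivity)
  have hsinh_le : sinh (κ * r) ≤ sinh (κ * s) := sinh_le_sinh.mpr (by gcongr)
  unfold resolventKernelH3
  gcongr

end ResolventKernel

/-- The principal matrix `Φ(-ν²)` on hyperbolic 3-space of curvature `-κ²`, for centres with
parameters `μs i` at mutual distances `D i j`. The values `D i i` do not enter. -/
noncomputable def principalMatrixH3 {ι : Type*} [DecidableEq ι] (κ ν : ℝ) (μs : ι → ℝ)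
    (D : ι → ι → ℝ) : Matrix ι ι ℝ :=
  of fun i j ↦
    if i = j then 1 / (4 * π) * (√(κ ^ 2 + ν ^ 2) - √(κ ^ 2 + μs i ^ 2))
    else -resolventKernelH3 κ ν (D i j)

section PrincipalMatrix

variable {ι : Type*} [DecidableEq ι] {κ ν μ d : ℝ} {μs : ι → ℝ} {D : ι → ι → ℝ} {i j : ι}

theorem principalMatrixH3_apply_self :
    principalMatrixH3 κ ν μs D i i =
      1 / (4 * π) * (√(κ ^ 2 + ν ^ 2) - √(κ ^ 2 + μs i ^ 2)) :=
  if_pos rfl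

theorem principalMatrixH3_apply_of_ne (hij : i ≠ j) :
    principalMatrixH3 κ ν μs D i j = -resolventKernelH3 κ ν (D i j) :=
  if_neg hij

theorem transpose_principalMatrixH3 :
    (principalMatrixH3 κ ν μs D)ᵀ = principalMatrixH3 κ ν μs (Function.swap D) := by
  ext i j
  rcases eq_or_ne i j with rfl | hij
  · simp only [transpose_apply, principalMatrixH3_apply_self]
  · rw [transpose_apply, principalMatrixH3_apply_of_ne hij.symm,
      principalMatrixH3_apply_of_ne hij, Function.swap]

theorem principalMatrixH3_apply_self_le (hμ : 0 ≤ μ) (hμs : μ ≤ μs i) :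
    principalMatrixH3 κ ν μs D i i ≤
      1 / (4 * π) * (√(κ ^ 2 + ν ^ 2) - √(κ ^ 2 + μ ^ 2)) := by
  rw [principalMatrixH3_apply_self]
  gcongr

theorem abs_principalMatrixH3_apply_le (hκ : 0 < κ) (hd : 0 < d) (hij : i ≠ j)
    (hD : d ≤ D i j) : |principalMatrixH3 κ ν μs D i j| ≤ resolventKernelH3 κ ν d := by
  have hDpos : 0 < D i j := hd.trans_le hD
  rw [principalMatrixH3_apply_of_ne hij, abs_neg,
    abs_of_nonneg (resolventKernelH3_nonneg hκ.le hDpos.le)]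
  exact antitoneOn_resolventKernelH3 hκ hd hDpos hD

variable [Fintype ι]

theorem principalMatrixH3_row_sum_neg (hκ : 0 < κ) (hμ : 0 ≤ μ) (hd : 0 < d)
    (hμs : ∀ i, μ ≤ μs i) (hD : ∀ i j, i ≠ j → d ≤ D i j)
    (h : √(κ ^ 2 + ν ^ 2) - √(κ ^ 2 + μ ^ 2) +
      ((Fintype.card ι : ℝ) - 1) * κ * exp (-d * √(κ ^ 2 + ν ^ 2)) / sinh (κ * d) < 0) (i : ι) :
    principalMatrixH3 κ ν μs D i i +
      ∑ j ∈ univ.erase i, |principalMatrixH3 κ ν μs D i j| < 0 := by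
  have hsum : ∑ j ∈ univ.erase i, |principalMatrixH3 κ ν μs D i j| ≤
      ((Fintype.card ι : ℝ) - 1) * resolventKernelH3 κ ν d := by
    rw [← card_univ, ← cast_card_erase_of_mem (mem_univ i), ← nsmul_eq_mul]
    refine sum_le_card_nsmul _ _ _ fun j hj ↦ ?_
    have hij : i ≠ j := (ne_of_mem_erase hj).symm
    exact abs_principalMatrixH3_apply_le hκ hd hij (hD i j hij)
  calc principalMatrixH3 κ ν μs D i i + ∑ j ∈ univ.erase i, |principalMatrixH3 κ ν μs D i j|
      ≤ 1 / (4 * π) * (√(κ ^ 2 + ν ^ 2) - √(κ ^ 2 + μ ^ 2)) +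
          ((Fintype.card ι : ℝ) - 1) * resolventKernelH3 κ ν d :=
        add_le_add (principalMatrixH3_apply_self_le hμ (hμs i)) hsum
    _ = 1 / (4 * π) * (√(κ ^ 2 + ν ^ 2) - √(κ ^ 2 + μ ^ 2) +
          ((Fintype.card ι : ℝ) - 1) * κ * exp (-d * √(κ ^ 2 + ν ^ 2)) / sinh (κ * d)) := by
        rw [resolventKernelH3]
        ring
    _ < 0 := mul_neg_of_pos_of_neg (by positivity) h

theorem principal_matrix_H3_negative_definite_general (hκ : 0 < κ) (hμ : 0 ≤ μ) (hd : 0 < d)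
    (hμs : ∀ i, μ ≤ μs i) (hD : ∀ i j, i ≠ j → d ≤ D i j)
    (h : √(κ ^ 2 + ν ^ 2) - √(κ ^ 2 + μ ^ 2) +
      ((Fintype.card ι : ℝ) - 1) * κ * exp (-d * √(κ ^ 2 + ν ^ 2)) / sinh (κ * d) < 0) :
    (∀ i, principalMatrixH3 κ ν μs D i i +
      ∑ j ∈ univ.erase i, |principalMatrixH3 κ ν μs D i j| < 0) ∧
    ∀ x : ι → ℝ, x ≠ 0 → x ⬝ᵥ principalMatrixH3 κ ν μs D *ᵥ x < 0 := by
  have hrow := principalMatrixH3_row_sum_neg hκ hμ hd hμs hD h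
  have hcol := principalMatrixH3_row_sum_neg (D := Function.swap D) hκ hμ hd hμs
    (fun i j hij ↦ hD j i hij.symm) h
  refine ⟨hrow, fun x hx ↦ ?_⟩
  simp only [← transpose_principalMatrixH3, transpose_apply] at hcol
  have hpos := re_dotProduct_mulVec_pos_of_sum_row_add_col_lt_re_diag
    (A := -principalMatrixH3 κ ν μs D) (fun i ↦ ?_) hx
  · simpa [neg_mulVec] using hpos
  · simp only [Matrix.neg_apply, norm_neg, norm_eq_abs, ← Finset.sum_div, sum_add_distrib,
      RCLike.re_to_real]
    linarith [hrow i, hcol i]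

end PrincipalMatrix

/-- Gershgorin criterion for the explicit principal matrix on hyperbolic 3-space `ℍ³_κ`:
if `√(κ²+ν²) - √(κ²+μ²) + (N-1) κ e^{-d √(κ²+ν²)}/sinh(κ d) < 0`, where `μ` is a lower
bound for the `μᵢ` and `d` a lower bound for the mutual distances `dᵢⱼ`, then every
Gershgorin row sum `Φᵢᵢ + Σ_{j≠i} |Φᵢⱼ|` is negative and `Φ(-ν²)` is negative definite. -/
theorem principal_matrix_H3_negative_definite (κ μ d ν : ℝ) (hκ : 0 < κ) (hμ : 0 < μ)
    (hd : 0 < d) (hν : 0 < ν) (N : ℕ) (hN : 1 ≤ N)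
    (μs : Fin N → ℝ) (hμs : ∀ i, μ ≤ μs i)
    (D : Fin N → Fin N → ℝ) (hDsymm : ∀ i j, D i j = D j i)
    (hDd : ∀ i j, i ≠ j → d ≤ D i j)
    (Φ : Matrix (Fin N) (Fin N) ℝ)
    (hΦ : ∀ i j, Φ i j =
      if i = j then
        (1 / (4 * π)) * (Real.sqrt (κ ^ 2 + ν ^ 2) - Real.sqrt (κ ^ 2 + μs i ^ 2))
      else
        -κ * Real.exp (-(D i j) * Real.sqrt (κ ^ 2 + ν ^ 2)) /
          (4 * π * Real.sinh (κ * D i j)))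
    (h : Real.sqrt (κ ^ 2 + ν ^ 2) - Real.sqrt (κ ^ 2 + μ ^ 2) +
        ((N : ℝ) - 1) * κ * Real.exp (-d * Real.sqrt (κ ^ 2 + ν ^ 2)) /
          Real.sinh (κ * d) < 0) :
    (∀ i, Φ i i + ∑ j ∈ Finset.univ.erase i, |Φ i j| < 0) ∧
    (∀ x : Fin N → ℝ, x ≠ 0 → x ⬝ᵥ Φ.mulVec x < 0) := by
  obtain rfl : Φ = principalMatrixH3 κ ν μs D := by
    ext i j
    rw [hΦ, principalMatrixH3, of_apply, resolventKernelH3, neg_mul κ, neg_div]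
  exact principal_matrix_H3_negative_definite_general hκ hμ.le hd hμs hDd
    (by rwa [Fintype.card_fin])
end

section
/- Let κ > 0, let N ≥ 1 be an integer, let μ₁, …, μ_N > 0 and let d_{ij} = d_{ji} > 0 for i ≠ j, and let Φ(−ν²) denote the explicit principal matrix on ℍ³_κ as a function of ν > 0. If there exists ν_* > 0 such that Φ(−ν_*²) is negative definite, then there exists ν > ν_* such that Φ(−ν²) is singular, i.e. det Φ(−ν²) = 0 (so −ν² is a bound state energy). -/
open Real Set Matrix

/-!
As `ν → ∞` the diagonal of the principal matrix tends to `+∞` while its off-diagonal entries tend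
to `0`, so by Gershgorin's theorem the matrix is eventually positive semidefinite. Among Hermitian
matrices positive semidefiniteness is a closed condition and positive definiteness an open one, and
the two differ only by singularity. If no positive semidefinite matrix along the path were singular,
then on the connected interval from `νs` to a large `ν` this condition would be both open and
closed, hence would hold at `νs`.
-/

section MatrixFamilies

open Filter Topology
open scoped ComplexOrder

variable {ι 𝕜 : Type*} [RCLike 𝕜]

theorem isClosed_setOf_posSemidef [Finite ι] :
    IsClosed {M : Matrix ι ι 𝕜 | M.PosSemidef} := by
  have := Fintype.ofFinite ι
  simp only [posSemidef_iff_dotProduct_mulVec, ofPred_and, ofPred_forall]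
  exact (isClosed_eq (by fun_prop) continuous_id).inter
    (isClosed_iInter fun x ↦ isClosed_le continuous_const (by fun_prop))

theorem posDef_iff_forall_mem_sphere [Fintype ι] {M : Matrix ι ι 𝕜} (hM : M.IsHermitian) :
    M.PosDef ↔ ∀ x ∈ Metric.sphere (0 : ι → 𝕜) 1, 0 < RCLike.re (star x ⬝ᵥ M *ᵥ x) := by
  constructor
  · intro h x hx
    exact (RCLike.pos_iff.1 (h.dotProduct_mulVec_pos (ne_zero_of_mem_unit_sphere ⟨x, hx⟩))).1
  · refine fun h ↦ .of_dotProduct_mulVec_pos hM fun x hx ↦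
      RCLike.pos_iff.2 ⟨?_, hM.im_star_dotProduct_mulVec_self x⟩
    set c : 𝕜 := ((‖x‖⁻¹ : ℝ) : 𝕜)
    have hunit : c • x ∈ Metric.sphere (0 : ι → 𝕜) 1 := by simp [c, norm_smul, hx]
    have hform : star (c • x) ⬝ᵥ M *ᵥ (c • x) = ((‖x‖⁻¹ ^ 2 : ℝ) : 𝕜) * (star x ⬝ᵥ M *ᵥ x) := by
      simp only [c, map_inv₀, star_smul, star_inv₀, RCLike.star_def, RCLike.conj_ofReal,
        mulVec_smul, dotProduct_smul, smul_dotProduct, smul_eq_mul, inv_pow, map_pow]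
      ring
    have hpos := h (c • x) hunit
    rw [hform, RCLike.re_ofReal_mul] at hpos
    exact pos_of_mul_pos_right hpos (by positivity)

theorem isOpen_setOf_posDef [Finite ι] {X : Type*} [TopologicalSpace X] {A : X → Matrix ι ι 𝕜}
    (hA : Continuous A) (hherm : ∀ t, (A t).IsHermitian) : IsOpen {t | (A t).PosDef} := by
  have := Fintype.ofFinite ι
  have hform : Continuous fun p : X × (ι → 𝕜) ↦ RCLike.re (star p.2 ⬝ᵥ A p.1 *ᵥ p.2) := by
    fun_prop
  simp only [posDef_iff_forall_mem_sphere (hherm _), isOpen_iff_mem_nhds]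
  intro t ht
  refine (isCompact_sphere 0 1).eventually_forall_of_forall_eventually fun x hx ↦ ?_
  exact hform.continuousAt.eventually_const_lt (ht x hx)

theorem exists_posSemidef_det_eq_zero_of_isPreconnected [Fintype ι] [DecidableEq ι]
    {X : Type*} [TopologicalSpace X] {S : Set X} (hS : IsPreconnected S)
    {A : X → Matrix ι ι 𝕜} (hA : Continuous A) (hherm : ∀ t, (A t).IsHermitian)
    {a b : X} (ha : a ∈ S) (hb : b ∈ S) (hAa : ¬ (A a).PosSemidef) (hAb : (A b).PosSemidef) :
    ∃ t ∈ S, (A t).PosSemidef ∧ (A t).det = 0 := by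
  by_contra! hdet
  have posDef_of_posSemidef {t : X} (ht : t ∈ S) (h : (A t).PosSemidef) : (A t).PosDef :=
    h.posDef_iff_det_ne_zero.2 (hdet t ht h)
  have hopen : IsOpen {t | (A t).PosSemidef}ᶜ :=
    (isClosed_setOf_posSemidef.preimage hA).isOpen_compl
  have hdisj : Disjoint {t | (A t).PosDef} {t | (A t).PosSemidef}ᶜ :=
    disjoint_compl_right_iff_subset.2 fun t ht ↦ ht.posSemidef
  have hcover : S ⊆ {t | (A t).PosDef} ∪ {t | (A t).PosSemidef}ᶜ := fun t ht ↦
    (em (A t).PosSemidef).imp_left (posDef_of_posSemidef ht)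
  have hposDef : S ⊆ {t | (A t).PosDef} :=
    hS.subset_left_of_subset_union (isOpen_setOf_posDef hA hherm) hopen hdisj hcover
      ⟨b, hb, posDef_of_posSemidef hb hAb⟩
  exact hAa (hposDef ha).posSemidef

theorem posSemidef_of_sum_row_le_diag [Fintype ι] [DecidableEq ι] {M : Matrix ι ι 𝕜}
    (hM : M.IsHermitian)
    (hdiag : ∀ k, ∑ j ∈ Finset.univ.erase k, ‖M k j‖ ≤ RCLike.re (M k k)) : M.PosSemidef := by
  refine hM.posSemidef_iff_eigenvalues_nonneg.2 fun i ↦ ?_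
  have heigenvalue : Module.End.HasEigenvalue (toLin' M) (hM.eigenvalues i : 𝕜) := by
    rw [Module.End.hasEigenvalue_iff_mem_spectrum, spectrum_toLin', hM.spectrum_eq_image_range]
    exact mem_image_of_mem _ (mem_range_self i)
  obtain ⟨k, hk⟩ := eigenvalue_mem_ball heigenvalue
  refine (sub_le_self_iff (RCLike.re (M k k))).1 ?_
  calc
    RCLike.re (M k k) - hM.eigenvalues i = RCLike.re (M k k - (hM.eigenvalues i : 𝕜)) := by simp
    _ ≤ ‖M k k - (hM.eigenvalues i : 𝕜)‖ := RCLike.re_le_norm _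
    _ ≤ ∑ j ∈ Finset.univ.erase k, ‖M k j‖ := mem_closedBall_iff_norm'.1 hk
    _ ≤ RCLike.re (M k k) := hdiag k

theorem eventually_posSemidef_of_tendsto_diag_atTop [Finite ι] {α : Type*} {l : Filter α}
    {A : α → Matrix ι ι 𝕜} {B : Matrix ι ι 𝕜} (hherm : ∀ᶠ t in l, (A t).IsHermitian)
    (hdiag : ∀ i, Tendsto (fun t ↦ RCLike.re (A t i i)) l atTop)
    (hoff : ∀ i j, i ≠ j → Tendsto (fun t ↦ A t i j) l (𝓝 (B i j))) :
    ∀ᶠ t in l, (A t).PosSemidef := by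
  classical
  have := Fintype.ofFinite ι
  have hdominant (k : ι) :
      ∀ᶠ t in l, ∑ j ∈ Finset.univ.erase k, ‖A t k j‖ ≤ RCLike.re (A t k k) := by
    have hrow : Tendsto (fun t ↦ ∑ j ∈ Finset.univ.erase k, ‖A t k j‖) l
        (𝓝 (∑ j ∈ Finset.univ.erase k, ‖B k j‖)) :=
      tendsto_finsetSum _ fun j hj ↦ (hoff k j (Finset.ne_of_mem_erase hj).symm).norm
    filter_upwards [hrow.eventually_le_const (lt_add_one _), (hdiag k).eventually_ge_atTop _]
      with t hrow_le hdiag_ge using hrow_le.trans hdiag_ge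
  filter_upwards [hherm, eventually_all.2 hdominant] with t using posSemidef_of_sum_row_le_diag

end MatrixFamilies

section PrincipalMatrix

open Filter Topology

variable {ι : Type*} [DecidableEq ι]

/-- The principal matrix of finitely many point interactions, as a function of
`s = √(κ² + ν²)`, with threshold values `m i = √(κ² + μᵢ²)`, distances `d i j` and coupling weights
`w i j`. On `ℍ³_κ` the weights are `κ / (4π sinh (κ dᵢⱼ))`; keeping them arbitrary also covers
flat space, where `κ = 0` and the weights are `1 / (4π dᵢⱼ)`. -/
noncomputable def principalMatrix (m : ι → ℝ) (w d : ι → ι → ℝ) (s : ℝ) : Matrix ι ι ℝ :=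
  of fun i j ↦ if i = j then 1 / (4 * π) * (s - m i) else -w i j * Real.exp (-(d i j) * s)

variable {m : ι → ℝ} {w d : ι → ι → ℝ}

theorem principalMatrix_apply_self (s : ℝ) (i : ι) :
    principalMatrix m w d s i i = 1 / (4 * π) * (s - m i) :=
  if_pos rfl

theorem principalMatrix_apply_of_ne (s : ℝ) {i j : ι} (h : i ≠ j) :
    principalMatrix m w d s i j = -w i j * Real.exp (-(d i j) * s) :=
  if_neg h

theorem continuous_principalMatrix : Continuous (principalMatrix m w d) := by
  refine continuous_matrix fun i j ↦ ?_
  obtain rfl | h := eq_or_ne i j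
  · simp only [principalMatrix_apply_self]
    fun_prop
  · simp only [principalMatrix_apply_of_ne _ h]
    fun_prop

theorem isHermitian_principalMatrix (hw : ∀ i j, w i j = w j i) (hd : ∀ i j, d i j = d j i)
    (s : ℝ) : (principalMatrix m w d s).IsHermitian := by
  refine .ext fun i j ↦ ?_
  obtain rfl | h := eq_or_ne i j
  · exact star_trivial _
  · rw [star_trivial, principalMatrix_apply_of_ne s h, principalMatrix_apply_of_ne s h.symm,
      hw, hd]

theorem eventually_posSemidef_principalMatrix [Finite ι] (hw : ∀ i j, w i j = w j i)
    (hd : ∀ i j, d i j = d j i) (hd_pos : ∀ i j, i ≠ j → 0 < d i j) :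
    ∀ᶠ s in atTop, (principalMatrix m w d s).PosSemidef := by
  refine eventually_posSemidef_of_tendsto_diag_atTop (B := 0)
    (.of_forall (isHermitian_principalMatrix hw hd)) (fun i ↦ ?_) fun i j h ↦ ?_
  · simp only [principalMatrix_apply_self]
    exact (tendsto_atTop_add_const_right atTop (-m i) tendsto_id).const_mul_atTop (by positivity)
  · simp only [principalMatrix_apply_of_ne _ h]
    have hexp : Tendsto (fun s ↦ Real.exp (-(d i j) * s)) atTop (𝓝 0) :=
      Real.tendsto_exp_atBot.comp
        (tendsto_id.const_mul_atTop_of_neg (neg_neg_of_pos (hd_pos i j h)))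
    simpa only [mul_zero, Matrix.zero_apply] using hexp.const_mul (-w i j)

theorem principal_matrix_H3_bound_state_general [Fintype ι] (κ : ℝ)
    (hw : ∀ i j, w i j = w j i) (hd : ∀ i j, d i j = d j i) (hd_pos : ∀ i j, i ≠ j → 0 < d i j)
    {νs : ℝ} (hνs : ¬ (principalMatrix m w d √(κ ^ 2 + νs ^ 2)).PosSemidef) :
    ∃ ν : ℝ, νs < ν ∧ (principalMatrix m w d √(κ ^ 2 + ν ^ 2)).det = 0 := by
  have hcont : Continuous fun ν : ℝ ↦ √(κ ^ 2 + ν ^ 2) := by fun_prop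
  have hsqrt : Tendsto (fun ν : ℝ ↦ √(κ ^ 2 + ν ^ 2)) atTop atTop :=
    Real.tendsto_sqrt_atTop.comp
      (tendsto_atTop_add_const_left _ _ (tendsto_pow_atTop two_ne_zero))
  obtain ⟨ν₁, hν₁, hle⟩ := ((hsqrt.eventually
    (eventually_posSemidef_principalMatrix hw hd hd_pos)).and (eventually_ge_atTop νs)).exists
  obtain ⟨ν, hν, hpsd, hdet⟩ := exists_posSemidef_det_eq_zero_of_isPreconnected
    (isPreconnected_Icc (a := νs) (b := ν₁)) (continuous_principalMatrix.comp hcont)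
    (fun _ ↦ isHermitian_principalMatrix hw hd _)
    (left_mem_Icc.2 hle) (right_mem_Icc.2 hle) hνs hν₁
  exact ⟨ν, hν.1.lt_of_ne fun h ↦ hνs (h ▸ hpsd), hdet⟩

end PrincipalMatrix

/-- If the explicit principal matrix `Φ(-ν_*²)` on hyperbolic 3-space `ℍ³_κ` is negative
definite for some `ν_* > 0`, then there is a bound state: there exists `ν > ν_*` with
`det Φ(-ν²) = 0`. -/
theorem principal_matrix_H3_bound_state (κ : ℝ) (hκ : 0 < κ) (N : ℕ) (hN : 1 ≤ N)
    (μs : Fin N → ℝ) (hμs : ∀ i, 0 < μs i)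
    (D : Fin N → Fin N → ℝ) (hDsymm : ∀ i j, D i j = D j i)
    (hD : ∀ i j, i ≠ j → 0 < D i j)
    (Φ : ℝ → Matrix (Fin N) (Fin N) ℝ)
    (hΦ : ∀ ν : ℝ, ∀ i j, Φ ν i j =
      if i = j then
        (1 / (4 * π)) * (Real.sqrt (κ ^ 2 + ν ^ 2) - Real.sqrt (κ ^ 2 + μs i ^ 2))
      else
        -κ * Real.exp (-(D i j) * Real.sqrt (κ ^ 2 + ν ^ 2)) /
          (4 * π * Real.sinh (κ * D i j)))
    (νs : ℝ) (hνs : 0 < νs)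
    (hneg : ∀ x : Fin N → ℝ, x ≠ 0 → x ⬝ᵥ (Φ νs).mulVec x < 0) :
    ∃ ν : ℝ, νs < ν ∧ (Φ ν).det = 0 := by
  have : Nonempty (Fin N) := Fin.pos_iff_nonempty.1 hN
  let w : Fin N → Fin N → ℝ := fun i j ↦ κ / (4 * π * Real.sinh (κ * D i j))
  have hΦ_eq (ν : ℝ) :
      Φ ν = principalMatrix (fun i ↦ √(κ ^ 2 + μs i ^ 2)) w D √(κ ^ 2 + ν ^ 2) := by
    ext i j
    rw [hΦ, principalMatrix, of_apply]
    congr 1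
    ring
  have hnot_psd : ¬ (Φ νs).PosSemidef := fun h ↦
    (hneg 1 one_ne_zero).not_ge (h.dotProduct_mulVec_nonneg 1)
  simp only [hΦ_eq] at hnot_psd ⊢
  exact principal_matrix_H3_bound_state_general κ (fun i j ↦ by simp only [w, hDsymm i j])
    hDsymm hD hnot_psd
end

section
/- Let t₀ > 1 and b ≥ 0. Then there exists t ∈ (1, t₀) with log(t/t₀) + b/t < 0 if and only if either (t₀ ≥ e and b < t₀/e) or (t₀ < e and b < log t₀). In particular, with t₀ = 1/2 + √(μ²/κ² + 1/4) and b = 2(N−1)/(κ d), this gives: if t₀ ≥ e then the condition for N bound states on ℍ²_κ is N − 1 < (κ d / (2e)) (1/2 + √(μ²/κ² + 1/4)), while if t₀ < e it is N − 1 < (κ d / 2) log(1/2 + √(μ²/κ² + 1/4)). -/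
open Real Set

/-!
Multiplying by `t > 0`, the condition `log (t / t₀) + b / t < 0` reads `b < t * log (t₀ / t)`, so a
solution exists iff `b` lies below the supremum of the concave function `t ↦ t * log (t₀ / t)`. Its
tangent line at `c` has slope `log (t₀ / c) - 1`: it is horizontal at `c = t₀ / e`, which is
therefore the maximizer when it belongs to the interval. To the right of `t₀ / e` the function is
decreasing, so that otherwise the supremum is approached at the left endpoint.
-/

theorem mul_log_div_le_tangentLine {s c t : ℝ} (hs : s ≠ 0) (hc : 0 < c) (ht : 0 < t) :
    t * log (s / t) ≤ c * log (s / c) + (log (s / c) - 1) * (t - c) := by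
  have log_split : log (s / t) = log (s / c) + log (c / t) := by
    rw [log_div hs ht.ne', log_div hs hc.ne', log_div hc.ne' ht.ne']
    ring
  have mul_log_le : t * log (c / t) ≤ c - t :=
    calc t * log (c / t) ≤ t * (c / t - 1) := by
          gcongr
          exact log_le_sub_one_of_pos (div_pos hc ht)
      _ = c - t := by field_simp
  rw [log_split]
  linarith

theorem mul_log_div_div_exp_one {s : ℝ} (hs : s ≠ 0) :
    s / exp 1 * log (s / (s / exp 1)) = s / exp 1 := by
  rw [div_div_cancel₀ hs, log_exp, mul_one]

theorem mul_log_div_le_div_exp_one {s t : ℝ} (hs : 0 < s) (ht : 0 < t) :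
    t * log (s / t) ≤ s / exp 1 := by
  have tangent := mul_log_div_le_tangentLine hs.ne' (div_pos hs (exp_pos 1)) ht
  rwa [mul_log_div_div_exp_one hs.ne', div_div_cancel₀ hs.ne', log_exp, sub_self, zero_mul,
    add_zero] at tangent

theorem antitoneOn_mul_log_div {s : ℝ} (hs : 0 < s) :
    AntitoneOn (fun t ↦ t * log (s / t)) (Ici (s / exp 1)) := by
  intro c hc t _ hct
  have hc_pos : 0 < c := (div_pos hs (exp_pos 1)).trans_le hc
  have slope_nonpos : log (s / c) - 1 ≤ 0 := by
    rw [sub_nonpos, log_le_iff_le_exp (div_pos hs hc_pos)]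
    exact (div_le_comm₀ (exp_pos 1) hc_pos).1 hc
  calc t * log (s / t) ≤ c * log (s / c) + (log (s / c) - 1) * (t - c) :=
        mul_log_div_le_tangentLine hs.ne' hc_pos (hc_pos.trans_le hct)
    _ ≤ c * log (s / c) :=
        add_le_of_nonpos_right (mul_nonpos_of_nonpos_of_nonneg slope_nonpos (sub_nonneg.2 hct))

theorem continuousAt_mul_log_div {s c : ℝ} (hs : s ≠ 0) (hc : c ≠ 0) :
    ContinuousAt (fun t ↦ t * log (s / t)) c :=
  continuousAt_id.mul ((continuousAt_const.div continuousAt_id hc).log (div_ne_zero hs hc))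

theorem isLUB_mul_log_div_of_mul_exp_one_le {a s : ℝ} (ha : 0 ≤ a) (has : a < s)
    (h : a * exp 1 ≤ s) :
    IsLUB ((fun t ↦ t * log (s / t)) '' Ioo a s) (s / exp 1) := by
  have hs : 0 < s := ha.trans_lt has
  have mem_closure : s / exp 1 ∈ closure (Ioo a s) := by
    rw [closure_Ioo has.ne]
    exact ⟨(le_div_iff₀ (exp_pos 1)).2 h, div_le_self hs.le (one_le_exp zero_le_one)⟩
  refine isLUB_of_mem_closure
    (forall_mem_image.2 fun t ht ↦ mul_log_div_le_div_exp_one hs (ha.trans_lt ht.1)) ?_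
  have continuousAt := continuousAt_mul_log_div hs.ne' (div_pos hs (exp_pos 1)).ne'
  simpa only [mul_log_div_div_exp_one hs.ne'] using mem_closure_image continuousAt mem_closure

theorem isLUB_mul_log_div_of_le_mul_exp_one {a s : ℝ} (has : a < s) (h : s ≤ a * exp 1) :
    IsLUB ((fun t ↦ t * log (s / t)) '' Ioo a s) (a * log (s / a)) := by
  have ha_pos : 0 < a := by nlinarith [one_lt_exp_iff.2 (zero_lt_one' ℝ)]
  have hs : 0 < s := ha_pos.trans has
  have ha_mem : s / exp 1 ≤ a := (div_le_iff₀ (exp_pos 1)).2 h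
  have mem_closure : a ∈ closure (Ioo a s) := by
    rw [closure_Ioo has.ne]
    exact left_mem_Icc.2 has.le
  exact isLUB_of_mem_closure
    (forall_mem_image.2 fun t ht ↦
      antitoneOn_mul_log_div hs ha_mem (ha_mem.trans ht.1.le) ht.1.le)
    (mem_closure_image (continuousAt_mul_log_div hs.ne' ha_pos.ne') mem_closure)

theorem log_div_add_div_neg_iff {s t b : ℝ} (ht : 0 < t) :
    log (t / s) + b / t < 0 ↔ b < t * log (s / t) := by
  rw [← inv_div, log_inv, neg_add_lt_iff_lt_add, add_zero, div_lt_iff₀' ht]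

theorem exists_log_div_add_div_neg_iff {a s b m : ℝ} (ha : 0 ≤ a)
    (hm : IsLUB ((fun t ↦ t * log (s / t)) '' Ioo a s) m) :
    (∃ t ∈ Ioo a s, log (t / s) + b / t < 0) ↔ b < m := by
  rw [lt_isLUB_iff hm, exists_mem_image]
  exact exists_congr fun t ↦ and_congr_right fun ht ↦ log_div_add_div_neg_iff (ha.trans_lt ht.1)

theorem bound_state_criterion_H2_general {a t₀ b : ℝ} (ha : 0 ≤ a) (hat : a < t₀) :
    (∃ t ∈ Ioo a t₀, log (t / t₀) + b / t < 0) ↔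
      ((a * exp 1 ≤ t₀ ∧ b < t₀ / exp 1) ∨ (t₀ < a * exp 1 ∧ b < a * log (t₀ / a))) := by
  rcases le_or_gt (a * exp 1) t₀ with h | h
  · rw [exists_log_div_add_div_neg_iff ha (isLUB_mul_log_div_of_mul_exp_one_le ha hat h)]
    simp only [h, h.not_gt, true_and, false_and, or_false]
  · rw [exists_log_div_add_div_neg_iff ha (isLUB_mul_log_div_of_le_mul_exp_one hat h.le)]
    simp only [h, h.not_ge, true_and, false_and, false_or]

/-- Infimum computation for the bound-state criterion on the hyperbolic plane `ℍ²_κ`: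
for `t₀ > 1` and `b ≥ 0`, there exists `t ∈ (1, t₀)` with `log(t/t₀) + b/t < 0` if and
only if either (`t₀ ≥ e` and `b < t₀/e`) or (`t₀ < e` and `b < log t₀`).
(With `t₀ = 1/2 + √(μ²/κ² + 1/4)` and `b = 2(N-1)/(κ d)` this yields the criterion
for `N` bound states of `N` point δ-interactions on `ℍ²_κ`.) -/
theorem bound_state_criterion_H2 (t₀ b : ℝ) (ht₀ : 1 < t₀) (hb : 0 ≤ b) :
    (∃ t ∈ Ioo 1 t₀, Real.log (t / t₀) + b / t < 0) ↔
      ((Real.exp 1 ≤ t₀ ∧ b < t₀ / Real.exp 1) ∨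
        (t₀ < Real.exp 1 ∧ b < Real.log t₀)) := by
  simpa only [one_mul, div_one] using bound_state_criterion_H2_general zero_le_one ht₀
end

section
/- Let m, d > 0, let μ be real with μ < m, and let N ≥ 1 be an integer. Then there exists E ∈ (μ, m) such that log((m − E)/(m − μ)) + (N−1)/(d (m − E)) < 0 if and only if N − 1 < d (m − μ)/e, where e is Euler's number. -/
open Real Set

/-!
In the variable `t = (m - E) / (m - μ) ∈ (0, 1)` and with `a = (N - 1) / (d (m - μ))`, the
inequality reads `log t + a / t < 0`, that is, `a < -t log t`. The function `-t log t` attains its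
maximum `1 / e` on `(0, 1)` at `t = 1 / e`, so a solution exists iff `a < 1 / e`.
-/

theorem negMulLog_exp_neg_one : negMulLog (exp (-1)) = exp (-1) := by
  simp [negMulLog]

theorem negMulLog_le_exp_neg_one {t : ℝ} (ht : 0 ≤ t) : negMulLog t ≤ exp (-1) := by
  rcases ht.eq_or_lt with rfl | ht
  · simpa only [negMulLog_zero] using (exp_pos (-1)).le
  · calc negMulLog t = -log t * exp (-(-log t)) := by
          rw [neg_neg, exp_log ht, negMulLog, neg_mul_comm, mul_comm]
      _ ≤ exp (-1) := mul_exp_neg_le_exp_neg_one (-log t)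

theorem isGreatest_negMulLog_image_Ioo_zero_one :
    IsGreatest (negMulLog '' Ioo 0 1) (exp (-1)) := by
  have exp_neg_one_mem : exp (-1) ∈ Ioo (0 : ℝ) 1 := ⟨exp_pos _, exp_lt_one_iff.2 neg_one_lt_zero⟩
  refine ⟨⟨exp (-1), exp_neg_one_mem, negMulLog_exp_neg_one⟩, ?_⟩
  rintro _ ⟨t, ht, rfl⟩
  exact negMulLog_le_exp_neg_one ht.1.le

theorem log_add_div_neg_iff_lt_negMulLog {t : ℝ} (ht : 0 < t) (a : ℝ) :
    log t + a / t < 0 ↔ a < negMulLog t :=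
  calc log t + a / t < 0
      ↔ a / t < -log t := lt_neg_iff_add_neg'.symm
    _ ↔ a < -log t * t := div_lt_iff₀ ht
    _ ↔ a < negMulLog t := by rw [negMulLog, neg_mul_comm, mul_comm]

theorem exists_mem_Ioo_log_add_div_neg_iff (a : ℝ) :
    (∃ t ∈ Ioo (0 : ℝ) 1, log t + a / t < 0) ↔ a < exp (-1) := by
  rw [lt_isLUB_iff isGreatest_negMulLog_image_Ioo_zero_one.isLUB, exists_mem_image]
  exact exists_congr fun t => and_congr_right fun ht => log_add_div_neg_iff_lt_negMulLog ht.1 a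

theorem image_sub_div_sub_Ioo {K : Type*} [Field K] [LinearOrder K] [IsStrictOrderedRing K]
    {a b : K} (hab : a < b) : (fun x => (b - x) / (b - a)) '' Ioo a b = Ioo 0 1 := by
  have length_pos : 0 < b - a := sub_pos.2 hab
  calc (fun x => (b - x) / (b - a)) '' Ioo a b
      = (· * (b - a)⁻¹) '' ((b - ·) '' Ioo a b) := by simp only [image_image, div_eq_mul_inv]
    _ = Ioo 0 1 := by
        rw [image_const_sub_Ioo, image_mul_right_Ioo _ _ (inv_pos.2 length_pos), sub_self, zero_mul,
          mul_inv_cancel₀ length_pos.ne']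

theorem relativistic_bound_state_criterion_R2_general {m d μ : ℝ} (hd : 0 < d) (hμ : μ < m)
    (c : ℝ) :
    (∃ E ∈ Ioo μ m, log ((m - E) / (m - μ)) + c / (d * (m - E)) < 0) ↔
      c < d * (m - μ) / exp 1 := by
  have gap_pos : 0 < m - μ := sub_pos.2 hμ
  have rescale (E : ℝ) : c / (d * (m - E)) = c / (d * (m - μ)) / ((m - E) / (m - μ)) := by
    field_simp
  calc (∃ E ∈ Ioo μ m, log ((m - E) / (m - μ)) + c / (d * (m - E)) < 0)
      ↔ ∃ t ∈ Ioo (0 : ℝ) 1, log t + c / (d * (m - μ)) / t < 0 := by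
        simp only [← image_sub_div_sub_Ioo hμ, exists_mem_image, ← rescale]
    _ ↔ c / (d * (m - μ)) < exp (-1) := exists_mem_Ioo_log_add_div_neg_iff _
    _ ↔ c < d * (m - μ) / exp 1 := by
        rw [div_lt_iff₀' (mul_pos hd gap_pos), exp_neg, div_eq_mul_inv]

/-- Infimum computation for the relativistic bound-state criterion on ℝ²: for
`m, d > 0`, `μ < m` real and an integer `N ≥ 1`, there exists `E ∈ (μ, m)` with
`log((m - E)/(m - μ)) + (N-1)/(d (m - E)) < 0` if and only if
`N - 1 < d (m - μ)/e`, where `e` is Euler's number. -/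
theorem relativistic_bound_state_criterion_R2 (m d μ : ℝ) (hm : 0 < m) (hd : 0 < d)
    (hμ : μ < m) (N : ℕ) (hN : 1 ≤ N) :
    (∃ E ∈ Ioo μ m,
        Real.log ((m - E) / (m - μ)) + ((N : ℝ) - 1) / (d * (m - E)) < 0) ↔
      (N : ℝ) - 1 < d * (m - μ) / Real.exp 1 :=
  relativistic_bound_state_criterion_R2_general hd hμ (N - 1)
end

section
/- Let m > 0, let N ≥ 1 be an integer, let 0 < μ_i ≤ μ < m for i = 1,…,N, let d_{ij} = d_{ji} ≥ d > 0 for i ≠ j, and let E be real with μ < E < m. Let Φ(E) be the relativistic principal matrix on ℝ². If (1/(2π)) log((m − E)/(m − μ)) + (N − 1)/(2π d (m − E)) < 0, then for every index i one has Φ_{ii}(E) + Σ_{j ≠ i} |Φ_{ij}(E)| < 0, and consequently Φ(E) is negative definite. -/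
open Real MeasureTheory Set Matrix Finset

/-!
Gershgorin's circle theorem places the spectrum of `-Φ` in `(0, ∞)` as soon as all row sums
`Φᵢᵢ + ∑_{j ≠ i} |Φᵢⱼ|` are negative. The diagonal entries are at most
`(1/2π) log ((m - E) / (m - μ))`. For the others, `s ≤ √(s² + 1)` bounds the exponent
`-r (m √(s² + 1) - E s)` by `-r (m - E) s`, so that integration gives
`|Φᵢⱼ| ≤ 1 / (2π dᵢⱼ (m - E))`.
-/

section DiagonallyDominant

variable {ι 𝕜 : Type*} [Fintype ι] [DecidableEq ι]

open scoped ComplexOrder in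
theorem posDef_of_sum_row_lt_diag [RCLike 𝕜] {A : Matrix ι ι 𝕜} (hA : A.IsHermitian)
    (h : ∀ i, ∑ j ∈ univ.erase i, ‖A i j‖ < RCLike.re (A i i)) : A.PosDef := by
  refine hA.posDef_iff_eigenvalues_pos.2 fun k => ?_
  have hk : Module.End.HasEigenvalue (toLin' A) (hA.eigenvalues k : 𝕜) :=
    Module.End.hasEigenvalue_iff_mem_spectrum.2 <| by
      rw [spectrum_toLin', hA.spectrum_eq_image_range]
      exact mem_image_of_mem _ (mem_range_self k)
  obtain ⟨i, hi⟩ := eigenvalue_mem_ball hk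
  have hdist : RCLike.re (A i i) - hA.eigenvalues k ≤ ∑ j ∈ univ.erase i, ‖A i j‖ :=
    calc RCLike.re (A i i) - hA.eigenvalues k
        = RCLike.re (A i i - (hA.eigenvalues k : 𝕜)) := by simp
      _ ≤ ‖A i i - (hA.eigenvalues k : 𝕜)‖ := RCLike.re_le_norm _
      _ ≤ ∑ j ∈ univ.erase i, ‖A i j‖ := mem_closedBall_iff_norm'.1 hi
  linarith [h i]

theorem dotProduct_mulVec_neg_of_diag_add_sum_row_neg {A : Matrix ι ι ℝ} (hA : A.IsSymm)
    (h : ∀ i, A i i + ∑ j ∈ univ.erase i, |A i j| < 0) {x : ι → ℝ} (hx : x ≠ 0) :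
    x ⬝ᵥ A *ᵥ x < 0 := by
  have hpos : (-A).PosDef :=
    posDef_of_sum_row_lt_diag (isHermitian_iff_isSymm.2 hA.neg) fun i => by
      simpa [lt_neg_iff_add_neg'] using h i
  simpa [neg_mulVec] using hpos.dotProduct_mulVec_pos hx

end DiagonallyDominant

/-- The off-diagonal profile of the relativistic principal matrix, a function of the distance `r`
between two centres; the corresponding entry is `-(1 / (2 * π))` times its value. -/
noncomputable def relativisticKernel (m E r : ℝ) : ℝ :=
  ∫ s in Ioi (0 : ℝ), exp (-r * (m * √(s ^ 2 + 1) - E * s)) / √(s ^ 2 + 1)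

theorem relativisticKernel_nonneg (m E r : ℝ) : 0 ≤ relativisticKernel m E r :=
  integral_nonneg fun _ => by positivity

theorem exp_div_sqrt_le_exp {m r : ℝ} (hm : 0 ≤ m) (hr : 0 ≤ r) (E s : ℝ) :
    exp (-r * (m * √(s ^ 2 + 1) - E * s)) / √(s ^ 2 + 1) ≤ exp (-(r * (m - E)) * s) := by
  have h_one : 1 ≤ √(s ^ 2 + 1) := one_le_sqrt.2 (by linarith [sq_nonneg s])
  have hs : s ≤ √(s ^ 2 + 1) := le_sqrt_of_sq_le (by linarith)
  refine (div_le_self (exp_pos _).le h_one).trans (exp_le_exp.2 ?_)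
  linarith [mul_le_mul_of_nonneg_left hs (mul_nonneg hr hm)]

theorem relativisticKernel_le {m E r : ℝ} (hm : 0 ≤ m) (hE : E < m) (hr : 0 < r) :
    relativisticKernel m E r ≤ 1 / (r * (m - E)) := by
  have hrate : -(r * (m - E)) < 0 := neg_neg_of_pos (mul_pos hr (sub_pos.2 hE))
  calc relativisticKernel m E r
      ≤ ∫ s in Ioi (0 : ℝ), exp (-(r * (m - E)) * s) :=
        integral_mono_of_nonneg (.of_forall fun _ => by positivity)
          (integrableOn_exp_mul_Ioi hrate 0) (.of_forall (exp_div_sqrt_le_exp hm hr.le E))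
    _ = 1 / (r * (m - E)) := by
      rw [integral_exp_mul_Ioi hrate, mul_zero, exp_zero, neg_div_neg_eq]

/-- The relativistic principal matrix `Φ(E)` on `ℝ²` for centres with parameters `μs i` and mutual
distances `D i j`. The diagonal values of `D` are junk. -/
noncomputable def relativisticPrincipalMatrix {ι : Type*} [DecidableEq ι] (m E : ℝ) (μs : ι → ℝ)
    (D : ι → ι → ℝ) : Matrix ι ι ℝ := of fun i j =>
  if i = j then 1 / (2 * π) * log ((m - E) / (m - μs i))
  else -(1 / (2 * π)) * relativisticKernel m E (D i j)

namespace relativisticPrincipalMatrix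

variable {ι : Type*} [DecidableEq ι] {m E : ℝ} {μs : ι → ℝ} {D : ι → ι → ℝ}

theorem isSymm (hD : ∀ i j, D i j = D j i) : (relativisticPrincipalMatrix m E μs D).IsSymm :=
  IsSymm.ext fun i j => by
    rcases eq_or_ne i j with rfl | hij
    · rfl
    · simp only [relativisticPrincipalMatrix, of_apply, hij, hij.symm, if_false, hD i j]

theorem apply_self_le {μ : ℝ} {i : ι} (hμ : μs i ≤ μ) (hμm : μ < m) (hE : E < m) :
    relativisticPrincipalMatrix m E μs D i i ≤ 1 / (2 * π) * log ((m - E) / (m - μ)) := by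
  have : 0 < m - E := sub_pos.2 hE
  have : 0 < m - μ := sub_pos.2 hμm
  have : 0 < m - μs i := sub_pos.2 (hμ.trans_lt hμm)
  rw [relativisticPrincipalMatrix, of_apply, if_pos rfl]
  gcongr

theorem abs_apply_le {i j : ι} (hij : i ≠ j) (hm : 0 ≤ m) (hE : E < m) (hD : 0 < D i j) :
    |relativisticPrincipalMatrix m E μs D i j| ≤ 1 / (2 * π * D i j * (m - E)) :=
  calc |relativisticPrincipalMatrix m E μs D i j|
      = 1 / (2 * π) * relativisticKernel m E (D i j) := by
        rw [relativisticPrincipalMatrix, of_apply, if_neg hij, neg_mul, abs_neg, abs_of_nonneg]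
        exact mul_nonneg (by positivity) (relativisticKernel_nonneg m E _)
    _ ≤ 1 / (2 * π) * (1 / (D i j * (m - E))) := by
        gcongr
        exact relativisticKernel_le hm hE hD
    _ = 1 / (2 * π * D i j * (m - E)) := by
        rw [one_div_mul_one_div, ← mul_assoc]

theorem sum_abs_apply_le [Fintype ι] {d : ℝ} (hm : 0 ≤ m) (hE : E < m) (hd : 0 < d) {i : ι}
    (hD : ∀ j, i ≠ j → d ≤ D i j) :
    ∑ j ∈ univ.erase i, |relativisticPrincipalMatrix m E μs D i j| ≤
      ((Fintype.card ι : ℝ) - 1) / (2 * π * d * (m - E)) := by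
  have : 0 < m - E := sub_pos.2 hE
  have hentry : ∀ j ∈ univ.erase i,
      |relativisticPrincipalMatrix m E μs D i j| ≤ 1 / (2 * π * d * (m - E)) := fun j hj => by
    have hij : i ≠ j := (ne_of_mem_erase hj).symm
    refine (abs_apply_le hij hm hE (hd.trans_le (hD j hij))).trans ?_
    gcongr
    exact hD j hij
  refine (sum_le_card_nsmul _ _ _ hentry).trans_eq ?_
  rw [nsmul_eq_mul, cast_card_erase_of_mem (mem_univ i), card_univ, mul_one_div]

end relativisticPrincipalMatrix

theorem relativistic_principal_matrix_negative_definite_general {ι : Type*} [Fintype ι]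
    [DecidableEq ι] {m μ d E : ℝ} (hm : 0 ≤ m) (hμm : μ < m) (hd : 0 < d) (hE : E < m)
    {μs : ι → ℝ} (hμs : ∀ i, μs i ≤ μ) {D : ι → ι → ℝ} (hDsymm : ∀ i j, D i j = D j i)
    (hDd : ∀ i j, i ≠ j → d ≤ D i j)
    (h : 1 / (2 * π) * log ((m - E) / (m - μ)) +
      ((Fintype.card ι : ℝ) - 1) / (2 * π * d * (m - E)) < 0) :
    (∀ i, relativisticPrincipalMatrix m E μs D i i +
      ∑ j ∈ univ.erase i, |relativisticPrincipalMatrix m E μs D i j| < 0) ∧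
    (∀ x : ι → ℝ, x ≠ 0 → x ⬝ᵥ relativisticPrincipalMatrix m E μs D *ᵥ x < 0) := by
  have hrow : ∀ i, relativisticPrincipalMatrix m E μs D i i +
      ∑ j ∈ univ.erase i, |relativisticPrincipalMatrix m E μs D i j| < 0 := fun i =>
    (add_le_add (relativisticPrincipalMatrix.apply_self_le (hμs i) hμm hE)
      (relativisticPrincipalMatrix.sum_abs_apply_le hm hE hd (hDd i))).trans_lt h
  exact ⟨hrow, fun _ => dotProduct_mulVec_neg_of_diag_add_sum_row_neg
    (relativisticPrincipalMatrix.isSymm hDsymm) hrow⟩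

/-- Gershgorin criterion for the relativistic principal matrix on ℝ²: if
`(1/(2π)) log((m-E)/(m-μ)) + (N-1)/(2π d (m-E)) < 0`, where `μ < m` is an upper bound
for the `μᵢ` and `d` a lower bound for the mutual distances `dᵢⱼ`, and `μ < E < m`,
then every Gershgorin row sum `Φᵢᵢ(E) + Σ_{j≠i} |Φᵢⱼ(E)|` is negative and `Φ(E)` is
negative definite. -/
theorem relativistic_principal_matrix_negative_definite (m μ d E : ℝ) (hm : 0 < m)
    (hμm : μ < m) (hd : 0 < d) (hE₁ : μ < E) (hE₂ : E < m)
    (N : ℕ) (hN : 1 ≤ N)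
    (μs : Fin N → ℝ) (hμs : ∀ i, 0 < μs i) (hμs' : ∀ i, μs i ≤ μ)
    (D : Fin N → Fin N → ℝ) (hDsymm : ∀ i j, D i j = D j i)
    (hDd : ∀ i j, i ≠ j → d ≤ D i j)
    (Φ : Matrix (Fin N) (Fin N) ℝ)
    (hΦ : ∀ i j, Φ i j =
      if i = j then (1 / (2 * π)) * Real.log ((m - E) / (m - μs i))
      else
        -(1 / (2 * π)) *
          ∫ s in Ioi (0 : ℝ),
            Real.exp (-(D i j) * (m * Real.sqrt (s ^ 2 + 1) - E * s)) /
              Real.sqrt (s ^ 2 + 1))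
    (h : (1 / (2 * π)) * Real.log ((m - E) / (m - μ)) +
        ((N : ℝ) - 1) / (2 * π * d * (m - E)) < 0) :
    (∀ i, Φ i i + ∑ j ∈ Finset.univ.erase i, |Φ i j| < 0) ∧
    (∀ x : Fin N → ℝ, x ≠ 0 → x ⬝ᵥ Φ.mulVec x < 0) := by
  obtain rfl : Φ = relativisticPrincipalMatrix m E μs D := Matrix.ext hΦ
  exact relativistic_principal_matrix_negative_definite_general hm.le hμm hd hE₂ hμs' hDsymm hDd
    (by rwa [Fintype.card_fin])
end

section
/- For every κ > 0, t > 0 and r ≥ 0, the heat kernel of the hyperbolic plane ℍ²_κ satisfies K_t(r) < (3/t) exp(−r²/(4t) − κ² t/4); that is, (√2/κ)(4π t)^{−3/2} e^{−κ² t/4} ∫_{κ r}^{∞} s e^{−s²/(4κ² t)} / √(cosh s − cosh(κ r)) ds < (3/t) exp(−r²/(4t) − κ² t/4). -/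
/-!
Since `cosh s - cosh a ≥ (s² - a²) / 2`, the integral defining the hyperbolic heat kernel is at most
`√2` times the same integral with `√(s² - a²)` in the denominator. The substitution
`u = √(s² - a²)`, with `s ds = u du`, turns the latter into a Gaussian integral over the half-line.
The outcome is that the heat kernel is at most `exp (-κ² t / 4)` times the heat kernel
`(4 π t)⁻¹ exp (-r² / (4 t))` of the Euclidean plane, and `1 / (4 π) < 3`.
-/

open Real MeasureTheory Set

lemma cosh_sub_cosh (x y : ℝ) :
    cosh x - cosh y = 2 * (sinh ((x + y) / 2) * sinh ((x - y) / 2)) := by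
  have hx : cosh x = cosh ((x + y) / 2 + (x - y) / 2) := by ring_nf
  have hy : cosh y = cosh ((x + y) / 2 - (x - y) / 2) := by ring_nf
  rw [hx, hy, cosh_add, cosh_sub]
  ring

lemma sq_sub_sq_div_two_le_cosh_sub_cosh {x y : ℝ} (h : |y| ≤ |x|) :
    (x ^ 2 - y ^ 2) / 2 ≤ cosh x - cosh y := by
  rw [← sq_abs x, ← sq_abs y, ← cosh_abs x, ← cosh_abs y, cosh_sub_cosh]
  have hy := abs_nonneg y
  have hadd : (|x| + |y|) / 2 ≤ sinh ((|x| + |y|) / 2) := self_le_sinh_iff.2 (by linarith)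
  have hsub : (|x| - |y|) / 2 ≤ sinh ((|x| - |y|) / 2) := self_le_sinh_iff.2 (by linarith)
  calc (|x| ^ 2 - |y| ^ 2) / 2 = 2 * ((|x| + |y|) / 2 * ((|x| - |y|) / 2)) := by ring
    _ ≤ 2 * (sinh ((|x| + |y|) / 2) * sinh ((|x| - |y|) / 2)) := by
      gcongr

lemma setIntegral_div_sqrt_cosh_sub_cosh_le {a : ℝ} (ha : 0 ≤ a) {w : ℝ → ℝ}
    (hw : ∀ s ∈ Ioi a, 0 ≤ w s)
    (hint : IntegrableOn (fun s ↦ w s / √(s ^ 2 - a ^ 2)) (Ioi a)) :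
    ∫ s in Ioi a, w s / √(cosh s - cosh a) ≤ √2 * ∫ s in Ioi a, w s / √(s ^ 2 - a ^ 2) := by
  rw [← integral_const_mul]
  refine integral_mono_of_nonneg ?_ (hint.const_mul _) ?_ <;>
    filter_upwards [ae_restrict_mem measurableSet_Ioi] with s (hs : a < s)
  · exact div_nonneg (hw s hs) (sqrt_nonneg _)
  have hpos : 0 < s ^ 2 - a ^ 2 := sub_pos.2 (pow_lt_pow_left₀ hs ha two_ne_zero)
  have hle : √(s ^ 2 - a ^ 2) / √2 ≤ √(cosh s - cosh a) := by
    rw [← sqrt_div hpos.le]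
    exact sqrt_le_sqrt (sq_sub_sq_div_two_le_cosh_sub_cosh (abs_le_abs_of_nonneg ha hs.le))
  have := hw s hs
  calc w s / √(cosh s - cosh a) ≤ w s / (√(s ^ 2 - a ^ 2) / √2) := by gcongr
    _ = √2 * (w s / √(s ^ 2 - a ^ 2)) := by field_simp

section SqrtSubstitution

variable {E : Type*} [NormedAddCommGroup E] [NormedSpace ℝ E] {a : ℝ}

lemma hasDerivAt_sqrt_sq_sub_sq {s : ℝ} (h : s ^ 2 ≠ a ^ 2) :
    HasDerivAt (fun s ↦ √(s ^ 2 - a ^ 2)) (s / √(s ^ 2 - a ^ 2)) s := by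
  simpa [mul_div_mul_left] using ((hasDerivAt_pow 2 s).sub_const (a ^ 2)).sqrt (sub_ne_zero.2 h)

lemma hasDerivWithinAt_sqrt_sq_sub_sq_Ioi (ha : 0 ≤ a) :
    ∀ s ∈ Ioi a, HasDerivWithinAt (fun s ↦ √(s ^ 2 - a ^ 2)) (s / √(s ^ 2 - a ^ 2)) (Ioi a) s :=
  fun _ hs ↦ (hasDerivAt_sqrt_sq_sub_sq
    (pow_lt_pow_left₀ hs ha two_ne_zero).ne').hasDerivWithinAt

lemma monotoneOn_sqrt_sq_sub_sq (ha : 0 ≤ a) : MonotoneOn (fun s ↦ √(s ^ 2 - a ^ 2)) (Ioi a) := by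
  intro x hx y _ hxy
  have hx0 : 0 ≤ x := ha.trans (le_of_lt hx)
  dsimp only
  gcongr

lemma image_sqrt_sq_sub_sq_Ioi (ha : 0 ≤ a) : (fun s ↦ √(s ^ 2 - a ^ 2)) '' Ioi a = Ioi 0 := by
  ext u
  constructor
  · rintro ⟨s, hs, rfl⟩
    exact sqrt_pos.2 (sub_pos.2 (pow_lt_pow_left₀ hs ha two_ne_zero))
  · intro (hu : 0 < u)
    refine ⟨√(u ^ 2 + a ^ 2), (lt_sqrt ha).2 (by simpa using pow_pos hu 2), ?_⟩
    dsimp only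
    rw [sq_sqrt (by positivity), add_sub_cancel_right, sqrt_sq hu.le]

lemma integrableOn_Ioi_comp_sqrt_sq_sub_sq_iff (ha : 0 ≤ a) (f : ℝ → E) :
    IntegrableOn (fun s ↦ (s / √(s ^ 2 - a ^ 2)) • f √(s ^ 2 - a ^ 2)) (Ioi a) ↔
      IntegrableOn f (Ioi 0) := by
  rw [← integrableOn_image_iff_integrableOn_deriv_smul_of_monotoneOn measurableSet_Ioi
    (hasDerivWithinAt_sqrt_sq_sub_sq_Ioi ha) (monotoneOn_sqrt_sq_sub_sq ha),
    image_sqrt_sq_sub_sq_Ioi ha]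

lemma integral_Ioi_comp_sqrt_sq_sub_sq (ha : 0 ≤ a) (f : ℝ → E) :
    ∫ s in Ioi a, (s / √(s ^ 2 - a ^ 2)) • f √(s ^ 2 - a ^ 2) = ∫ u in Ioi 0, f u := by
  rw [← integral_image_eq_integral_deriv_smul_of_monotoneOn measurableSet_Ioi
    (hasDerivWithinAt_sqrt_sq_sub_sq_Ioi ha) (monotoneOn_sqrt_sq_sub_sq ha),
    image_sqrt_sq_sub_sq_Ioi ha]

end SqrtSubstitution

section Gaussian

variable {a c : ℝ}

lemma mul_exp_neg_mul_sq_div_sqrt_eq {s : ℝ} (h : a ^ 2 ≤ s ^ 2) :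
    s * exp (-c * s ^ 2) / √(s ^ 2 - a ^ 2) =
      (s / √(s ^ 2 - a ^ 2)) • (exp (-c * a ^ 2) * exp (-c * √(s ^ 2 - a ^ 2) ^ 2)) := by
  rw [sq_sqrt (sub_nonneg.2 h), ← exp_add, smul_eq_mul]
  ring_nf

lemma integrableOn_mul_exp_neg_mul_sq_div_sqrt (ha : 0 ≤ a) (hc : 0 < c) :
    IntegrableOn (fun s ↦ s * exp (-c * s ^ 2) / √(s ^ 2 - a ^ 2)) (Ioi a) := by
  refine IntegrableOn.congr_fun ?_ (fun s hs ↦ (mul_exp_neg_mul_sq_div_sqrt_eq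
    (pow_le_pow_left₀ ha (le_of_lt hs) 2)).symm) measurableSet_Ioi
  exact (integrableOn_Ioi_comp_sqrt_sq_sub_sq_iff ha _).2
    ((integrable_exp_neg_mul_sq hc).integrableOn.const_mul _)

lemma integral_mul_exp_neg_mul_sq_div_sqrt (ha : 0 ≤ a) :
    ∫ s in Ioi a, s * exp (-c * s ^ 2) / √(s ^ 2 - a ^ 2) =
      exp (-c * a ^ 2) * (√(π / c) / 2) := by
  rw [setIntegral_congr_fun measurableSet_Ioi fun s hs ↦ mul_exp_neg_mul_sq_div_sqrt_eq
      (pow_le_pow_left₀ ha (le_of_lt hs) 2),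
    integral_Ioi_comp_sqrt_sq_sub_sq ha fun u ↦ exp (-c * a ^ 2) * exp (-c * u ^ 2),
    integral_const_mul, integral_gaussian_Ioi]

lemma integral_mul_exp_neg_mul_sq_div_sqrt_cosh_sub_cosh_le (ha : 0 ≤ a) (hc : 0 < c) :
    ∫ s in Ioi a, s * exp (-c * s ^ 2) / √(cosh s - cosh a) ≤
      √2 / 2 * √(π / c) * exp (-c * a ^ 2) :=
  calc ∫ s in Ioi a, s * exp (-c * s ^ 2) / √(cosh s - cosh a)
      ≤ √2 * ∫ s in Ioi a, s * exp (-c * s ^ 2) / √(s ^ 2 - a ^ 2) :=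
        setIntegral_div_sqrt_cosh_sub_cosh_le ha
          (fun _ hs ↦ mul_nonneg (ha.trans (le_of_lt hs)) (exp_nonneg _))
          (integrableOn_mul_exp_neg_mul_sq_div_sqrt ha hc)
    _ = √2 / 2 * √(π / c) * exp (-c * a ^ 2) := by
        rw [integral_mul_exp_neg_mul_sq_div_sqrt ha]
        ring

end Gaussian

lemma rpow_neg_three_halves_mul_sqrt {x : ℝ} (hx : 0 < x) : x ^ (-(3 : ℝ) / 2) * √x = x⁻¹ := by
  rw [sqrt_eq_rpow, ← rpow_add hx, ← rpow_neg_one]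
  norm_num

/-- The heat kernel `K_t(r)` of the hyperbolic plane of constant sectional curvature `-κ²`, at time
`t` and geodesic distance `r`, given by its explicit integral formula; meaningful for `0 < κ`,
`0 < t` and `0 ≤ r`. -/
noncomputable def hyperbolicPlaneHeatKernel (κ t r : ℝ) : ℝ :=
  √2 / κ * (4 * π * t) ^ (-(3 : ℝ) / 2) * exp (-κ ^ 2 * t / 4) *
    ∫ s in Ioi (κ * r), s * exp (-s ^ 2 / (4 * κ ^ 2 * t)) / √(cosh s - cosh (κ * r))

section HeatKernel

variable {κ t r : ℝ}

lemma hyperbolicPlaneHeatKernel_integral_le (hκ : 0 < κ) (ht : 0 < t) (hr : 0 ≤ r) :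
    ∫ s in Ioi (κ * r), s * exp (-s ^ 2 / (4 * κ ^ 2 * t)) / √(cosh s - cosh (κ * r)) ≤
      √2 / 2 * (κ * √(4 * π * t)) * exp (-r ^ 2 / (4 * t)) := by
  have hexponent (s : ℝ) : -s ^ 2 / (4 * κ ^ 2 * t) = -(4 * κ ^ 2 * t)⁻¹ * s ^ 2 := by ring
  have hgauss : √(π / (4 * κ ^ 2 * t)⁻¹) = κ * √(4 * π * t) := by
    rw [div_inv_eq_mul, show π * (4 * κ ^ 2 * t) = κ ^ 2 * (4 * π * t) by ring,
      sqrt_mul (sq_nonneg κ), sqrt_sq hκ.le]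
  have hdist : -r ^ 2 / (4 * t) = -(4 * κ ^ 2 * t)⁻¹ * (κ * r) ^ 2 := by field_simp
  simp only [hexponent]
  rw [← hgauss, hdist]
  exact integral_mul_exp_neg_mul_sq_div_sqrt_cosh_sub_cosh_le (by positivity) (by positivity)

theorem hyperbolicPlaneHeatKernel_le (hκ : 0 < κ) (ht : 0 < t) (hr : 0 ≤ r) :
    hyperbolicPlaneHeatKernel κ t r ≤
      1 / (4 * π * t) * exp (-r ^ 2 / (4 * t) - κ ^ 2 * t / 4) :=
  calc hyperbolicPlaneHeatKernel κ t r
      ≤ √2 / κ * (4 * π * t) ^ (-(3 : ℝ) / 2) * exp (-κ ^ 2 * t / 4) *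
          (√2 / 2 * (κ * √(4 * π * t)) * exp (-r ^ 2 / (4 * t))) :=
        mul_le_mul_of_nonneg_left (hyperbolicPlaneHeatKernel_integral_le hκ ht hr) (by positivity)
    _ = √2 ^ 2 / 2 * (κ / κ) * ((4 * π * t) ^ (-(3 : ℝ) / 2) * √(4 * π * t)) *
          (exp (-r ^ 2 / (4 * t)) * exp (-κ ^ 2 * t / 4)) := by ring
    _ = 1 / (4 * π * t) * exp (-r ^ 2 / (4 * t) - κ ^ 2 * t / 4) := by
        rw [sq_sqrt zero_le_two, div_self hκ.ne', rpow_neg_three_halves_mul_sqrt (by positivity),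
          ← exp_add]
        ring_nf

end HeatKernel

/-- Davies–Mandouvalos type Gaussian upper bound with explicit constant for the heat
kernel of the hyperbolic plane `ℍ²_κ`: for `κ > 0`, `t > 0` and `r ≥ 0`,
`(√2/κ)(4π t)^{-3/2} e^{-κ² t/4} ∫_{κ r}^∞ s e^{-s²/(4κ² t)}/√(cosh s - cosh(κ r)) ds
  < (3/t) exp(-r²/(4t) - κ² t/4)`. -/
theorem heat_kernel_H2_upper_bound (κ t r : ℝ) (hκ : 0 < κ) (ht : 0 < t) (hr : 0 ≤ r) :
    (Real.sqrt 2 / κ) * (4 * π * t) ^ (-(3 : ℝ) / 2) * Real.exp (-κ ^ 2 * t / 4) *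
        (∫ s in Ioi (κ * r),
          s * Real.exp (-s ^ 2 / (4 * κ ^ 2 * t)) /
            Real.sqrt (Real.cosh s - Real.cosh (κ * r)))
      < (3 / t) * Real.exp (-r ^ 2 / (4 * t) - κ ^ 2 * t / 4) := by
  have hconst : 1 / (4 * π * t) < 3 / t := by
    rw [div_lt_div_iff₀ (by positivity) ht]
    nlinarith [pi_gt_three]
  calc hyperbolicPlaneHeatKernel κ t r
      ≤ 1 / (4 * π * t) * exp (-r ^ 2 / (4 * t) - κ ^ 2 * t / 4) :=
        hyperbolicPlaneHeatKernel_le hκ ht hr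
    _ < 3 / t * exp (-r ^ 2 / (4 * t) - κ ^ 2 * t / 4) := by gcongr
end
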